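/- arXiv:1511.03322 — 2 statements merged into one kernel-verified Lean document; each statement's English description precedes it below -/
import Mathlib

section
/- Let H be a 2-full, marked, aperiodic and primitive substitution over a finite alphabet A. Then there exists a continuous function U : A^ℕ → ℝ such that R(U) = U, U vanishes identically on K, and U(x) > 0 for every x ∈ A^ℕ \ K. -/
open Filter Topology MeasureTheory

variable {A : Type*}

/-- The shift map on infinite words. -/
def shift (x : ℕ → A) : ℕ → A := fun n => x (n + 1)

/-- Image of a finite word under a substitution. -/
def wordMap (H : A → List A) (w : List A) : List A := w.flatMap H

/-- Image of an infinite word under a substitution (each `H a` nonempty makes this the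
infinite concatenation `H(x₀)H(x₁)⋯`). -/
def substSeq (H : A → List A) (x : ℕ → A) : ℕ → A :=
  fun n => (wordMap H ((List.range (n + 1)).map x)).getD n (x 0)

/-- The prefix of length `n` of an infinite word. -/
def prefixWord (x : ℕ → A) (n : ℕ) : List A := (List.range n).map x

/-- The factor of length `n` at position `i` of an infinite word. -/
def factorAt (x : ℕ → A) (i n : ℕ) : List A := (List.range n).map fun j => x (i + j)

/-- The language of an infinite word: the set of its finite factors. -/
def Lang (u : ℕ → A) : Set (List A) := {w | ∃ i, w = factorAt u i w.length}

/-- A sequence is (purely) periodic for the shift. -/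
def PeriodicSeq (x : ℕ → A) : Prop := ∃ m, 0 < m ∧ ∀ n, x (n + m) = x n

/-- `u` is a fixed point of the substitution `H`. -/
def IsFixedPointSubst (H : A → List A) (u : ℕ → A) : Prop := substSeq H u = u

/-- `H` is primitive: some power of `H` maps every letter onto a word containing
every letter. -/
def PrimitiveSubst (H : A → List A) : Prop :=
  ∃ k, 0 < k ∧ ∀ a b : A, b ∈ (wordMap H)^[k] [a]

/-- `H` is aperiodic: no fixed point of `H` is periodic for the shift. -/
def AperiodicSubst (H : A → List A) : Prop :=
  ∀ u : ℕ → A, IsFixedPointSubst H u → ¬ PeriodicSeq u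

/-- `H` is marked: first letters of images are pairwise distinct, and so are last letters. -/
def MarkedSubst (H : A → List A) (hne : ∀ a, H a ≠ []) : Prop :=
  Function.Injective (fun a => (H a).head (hne a)) ∧
  Function.Injective (fun a => (H a).getLast (hne a))

/-- `H` is 2-full (with respect to the fixed point `u`): every word of length 2 belongs
to the language. -/
def TwoFull (H : A → List A) (u : ℕ → A) : Prop :=
  ∀ w : List A, w.length = 2 → w ∈ Lang u

/-- The attractor `K`: closure of the shift-orbit of the fixed point `u`. -/
def orbitClosure [TopologicalSpace A] (u : ℕ → A) : Set (ℕ → A) :=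
  closure {y | ∃ n, y = shift^[n] u}

/-- `δ(x)`: the length of the maximal prefix of `x` belonging to the language of `u`. -/
noncomputable def delta (u x : ℕ → A) : ℕ := sSup {n | prefixWord x n ∈ Lang u}

/-- The renormalization operator `R`. -/
noncomputable def renorm (H : A → List A) (V : (ℕ → A) → ℝ) : (ℕ → A) → ℝ :=
  fun x => ∑ i ∈ Finset.range (H (x 0)).length, V (shift^[i] (substSeq H x))

/-- `t_n(x) = |H^n(x₀)|`. -/
def tlen (H : A → List A) (n : ℕ) (x : ℕ → A) : ℕ := ((wordMap H)^[n] [x 0]).length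

/-- An accident occurs at time `b`. -/
def AccidentAt (u x : ℕ → A) (b : ℕ) : Prop :=
  0 < b ∧ delta u x - b < delta u (shift^[b] x) ∧
    ∀ i < b, delta u (shift^[i] x) = delta u x - i

/-- The first accident time of `x` (junk value `0` if there is none). -/
noncomputable def firstAccident (u x : ℕ → A) : ℕ := sInf {b | AccidentAt u x b}

/-- The `j`-th accident time `B_j` of `x`, defined inductively. -/
noncomputable def accidentTime (u x : ℕ → A) : ℕ → ℕ
  | 0 => 0
  | j + 1 => accidentTime u x j + firstAccident u (shift^[accidentTime u x j] x)

/-- The set of (genuine) accident times of `x`. -/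
def AccidentSet (u x : ℕ → A) : Set ℕ :=
  {B | ∃ j : ℕ, B = accidentTime u x (j + 1) ∧
        AccidentAt u (shift^[accidentTime u x j] x)
          (firstAccident u (shift^[accidentTime u x j] x))}

/-- A word is right special. -/
def RightSpecial (u : ℕ → A) (w : List A) : Prop :=
  ∃ b c : A, b ≠ c ∧ w ++ [b] ∈ Lang u ∧ w ++ [c] ∈ Lang u

/-- A word is left special. -/
def LeftSpecial (u : ℕ → A) (w : List A) : Prop :=
  ∃ a b : A, a ≠ b ∧ a :: w ∈ Lang u ∧ b :: w ∈ Lang u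

/-- A word is bispecial. -/
def Bispecial (u : ℕ → A) (w : List A) : Prop := RightSpecial u w ∧ LeftSpecial u w

/-- `l` is a recognizability constant for `H`: every long enough word of the language
admits a unique desubstitution. -/
def RecogBound (H : A → List A) (u : ℕ → A) (l : ℕ) : Prop :=
  ∀ z ∈ Lang u, l < z.length →
    ∃! d : List A × List A × List A,
      ∃ s p : A,
        z = d.1 ++ wordMap H d.2.1 ++ d.2.2 ∧
        d.2.1 ∈ Lang u ∧
        d.1 <:+ H s ∧ d.1.length < (H s).length ∧
        d.2.2 <+: H p ∧ d.2.2.length < (H p).length ∧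
        ([s] ++ d.2.1 ++ [p]) ∈ Lang u

/-- The incidence matrix of a substitution, with real entries. -/
def incMat [Fintype A] [DecidableEq A] (H : A → List A) : Matrix A A ℝ :=
  fun a b => ((H a).count b : ℝ)

/-- `lam` is the Perron–Frobenius eigenvalue of the incidence matrix of the (primitive)
substitution `H`: it admits an entrywise positive eigenvector. -/
def IsPerronValue [Fintype A] [DecidableEq A] (H : A → List A) (lam : ℝ) : Prop :=
  ∃ v : A → ℝ, (∀ a, 0 < v a) ∧ (incMat H).mulVec v = lam • v

/-- Concatenation of a finite word with an infinite word. -/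
def catWord (S : List A) (y : ℕ → A) : ℕ → A :=
  fun n => S.getD n (y (n - S.length))

section Helpers

variable {A : Type*}

/-- cut positions of the parse of `H(x)` -/
def cutPos (H : A → List A) (x : ℕ → A) (n : ℕ) : ℕ := ∑ j ∈ Finset.range n, (H (x j)).length

/-- block index and offset of a position of `H(x)` -/
def locPos (H : A → List A) (x : ℕ → A) : ℕ → ℕ × ℕ
  | 0 => (0, 0)
  | P + 1 => if (locPos H x P).2 + 1 < (H (x (locPos H x P).1)).length then
      ((locPos H x P).1, (locPos H x P).2 + 1) else ((locPos H x P).1 + 1, 0)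

lemma cutPos_zero (H : A → List A) (x : ℕ → A) : cutPos H x 0 = 0 := by simp [cutPos]

lemma cutPos_succ (H : A → List A) (x : ℕ → A) (n : ℕ) :
    cutPos H x (n + 1) = cutPos H x n + (H (x n)).length := by
  simp [cutPos, Finset.sum_range_succ]

lemma len_pos {H : A → List A} (hne : ∀ a, H a ≠ []) (a : A) : 0 < (H a).length :=
  List.length_pos_iff.mpr (hne a)

lemma cutPos_strictMono {H : A → List A} (hne : ∀ a, H a ≠ []) (x : ℕ → A) :
    StrictMono (cutPos H x) := by
  apply strictMono_nat_of_lt_succ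
  intro n
  rw [cutPos_succ]
  have := len_pos hne (x n)
  omega

lemma locPos_spec {H : A → List A} (hne : ∀ a, H a ≠ []) (x : ℕ → A) (P : ℕ) :
    (locPos H x P).2 < (H (x (locPos H x P).1)).length ∧
      P = cutPos H x (locPos H x P).1 + (locPos H x P).2 := by
  induction P with
  | zero => exact ⟨len_pos hne _, by simp [locPos, cutPos]⟩
  | succ P ih =>
    rw [locPos]
    split_ifs with h
    · exact ⟨h, by simp only; omega⟩
    · refine ⟨len_pos hne _, ?_⟩
      simp only [cutPos_succ]
      omega

lemma locPos_eq {H : A → List A} (hne : ∀ a, H a ≠ []) (x : ℕ → A) {P j r : ℕ}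
    (hr : r < (H (x j)).length) (hP : P = cutPos H x j + r) : locPos H x P = (j, r) := by
  obtain ⟨h1, h2⟩ := locPos_spec hne x P
  set j' := (locPos H x P).1 with hj'
  set r' := (locPos H x P).2 with hr'
  have hm := (cutPos_strictMono hne x).monotone
  have e : j' = j := by
    rcases lt_trichotomy j' j with h | h | h
    · have := hm (show j' + 1 ≤ j from h)
      rw [cutPos_succ] at this
      omega
    · exact h
    · have := hm (show j + 1 ≤ j' from h)
      rw [cutPos_succ] at this
      omega
  have e2 : r' = r := by rw [e] at h2; omega
  exact Prod.ext e e2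

lemma length_wordMap_prefix (H : A → List A) (x : ℕ → A) (n : ℕ) :
    (wordMap H ((List.range n).map x)).length = cutPos H x n := by
  induction n with
  | zero => simp [wordMap, cutPos]
  | succ n ih =>
    rw [cutPos_succ, ← ih, List.range_succ]
    simp [wordMap]

lemma getElem_wordMap_prefix (H : A → List A) (x : ℕ → A) (n j r : ℕ) (hj : j < n)
    (hr : r < (H (x j)).length) :
    (wordMap H ((List.range n).map x))[cutPos H x j + r]? = (H (x j))[r]? := by
  induction n with
  | zero => omega
  | succ n ih =>
    have e : wordMap H ((List.range (n+1)).map x) = wordMap H ((List.range n).map x) ++ H (x n) := by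
      rw [List.range_succ]; simp [wordMap]
    rw [e]
    rcases Nat.lt_or_ge j n with h | h
    · have hlt : cutPos H x j + r < (wordMap H ((List.range n).map x)).length := by
        rw [length_wordMap_prefix]
        have : cutPos H x (j+1) ≤ cutPos H x n := by
          unfold cutPos
          exact Finset.sum_le_sum_of_subset (Finset.range_mono h)
        rw [cutPos_succ] at this
        omega
      rw [List.getElem?_append_left hlt]
      exact ih h
    · have : j = n := by omega
      subst this
      rw [List.getElem?_append_right (by rw [length_wordMap_prefix]; omega), length_wordMap_prefix]
      simp

lemma substSeq_spec {H : A → List A} (hne : ∀ a, H a ≠ []) (x : ℕ → A) (j r : ℕ)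
    (hr : r < (H (x j)).length) :
    (H (x j))[r]? = some (substSeq H x (cutPos H x j + r)) := by
  have hj : j ≤ cutPos H x j := (cutPos_strictMono hne x).le_apply
  have := getElem_wordMap_prefix H x (cutPos H x j + r + 1) j r (by omega) hr
  unfold substSeq
  rw [List.getD_eq_getElem?_getD, this]
  rw [List.getElem?_eq_getElem hr]
  simp

lemma substSeq_loc {H : A → List A} (hne : ∀ a, H a ≠ []) (x : ℕ → A) (P : ℕ) :
    (H (x (locPos H x P).1))[(locPos H x P).2]? = some (substSeq H x P) := by
  obtain ⟨h1, h2⟩ := locPos_spec hne x P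
  rw [substSeq_spec hne x _ _ h1, ← h2]

lemma agree_subst {H : A → List A} (hne : ∀ a, H a ≠ []) (x y : ℕ → A) (k n : ℕ)
    (h : ∀ j < n, x j = y (k + j)) :
    cutPos H y (k + n) = cutPos H y k + cutPos H x n ∧
      ∀ P < cutPos H x n, substSeq H x P = substSeq H y (cutPos H y k + P) := by
  have hc : ∀ m ≤ n, cutPos H y (k + m) = cutPos H y k + cutPos H x m := by
    intro m hm
    induction m with
    | zero => simp [cutPos_zero]
    | succ m ih =>
      rw [← add_assoc, cutPos_succ, cutPos_succ, ih (by omega), h m (by omega)]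
      omega
  refine ⟨hc n le_rfl, fun P hP => ?_⟩
  obtain ⟨h1, h2⟩ := locPos_spec hne x P
  set j := (locPos H x P).1
  set r := (locPos H x P).2
  have hj : j < n := by
    by_contra hh
    have := (cutPos_strictMono hne x).monotone (not_lt.mp hh)
    omega
  have e1 := substSeq_spec hne x j r h1
  have e2 := substSeq_spec hne y (k + j) r (by rw [← h j hj]; exact h1)
  rw [← h j hj, e1, hc j hj.le] at e2
  rw [h2]
  have := Option.some.inj e2
  rw [this]
  congr 1
  omega

lemma marked_head {H : A → List A} {hne : ∀ a, H a ≠ []} (hm : MarkedSubst H hne) {a b : A}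
    (h : (H a)[0]? = (H b)[0]?) : a = b := by
  apply hm.1
  have ha : (H a)[0]? = some ((H a).head (hne a)) := by
    rw [← List.head?_eq_getElem?, List.head?_eq_some_head]
  have hb : (H b)[0]? = some ((H b).head (hne b)) := by
    rw [← List.head?_eq_getElem?, List.head?_eq_some_head]
  rw [ha, hb] at h
  exact Option.some.inj h

lemma marked_last {H : A → List A} {hne : ∀ a, H a ≠ []} (hm : MarkedSubst H hne) {a b : A}
    (h : (H a)[(H a).length - 1]? = (H b)[(H b).length - 1]?) : a = b := by
  apply hm.2
  have ha : (H a)[(H a).length - 1]? = some ((H a).getLast (hne a)) := by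
    rw [← List.getLast?_eq_getElem?, List.getLast?_eq_some_getLast]
  have hb : (H b)[(H b).length - 1]? = some ((H b).getLast (hne b)) := by
    rw [← List.getLast?_eq_getElem?, List.getLast?_eq_some_getLast]
  rw [ha, hb] at h
  exact Option.some.inj h

/-- state of a position -/
def statePos (H : A → List A) (x : ℕ → A) (P : ℕ) : A × ℕ :=
  (x (locPos H x P).1, (locPos H x P).2)

lemma state_letter {H : A → List A} (hne : ∀ a, H a ≠ []) {x y : ℕ → A} {P Q : ℕ}
    (h : statePos H x P = statePos H y Q) : substSeq H x P = substSeq H y Q := by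
  have h1 := substSeq_loc hne x P
  have h2 := substSeq_loc hne y Q
  simp only [statePos, Prod.mk.injEq] at h
  rw [h.1, h.2, h2] at h1
  exact (Option.some.inj h1).symm

lemma state_step_noncut {H : A → List A} {x y : ℕ → A} {P Q : ℕ}
    (h : statePos H x P = statePos H y Q) (hc : (locPos H x (P + 1)).2 ≠ 0) :
    statePos H x (P + 1) = statePos H y (Q + 1) := by
  simp only [statePos, Prod.mk.injEq] at h
  obtain ⟨h1, h2⟩ := h
  rw [locPos] at hc
  split_ifs at hc with h3
  · have h4 := h3
    rw [h1, h2] at h4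
    simp only [statePos, locPos, if_pos h4, h1, h2]
  · simp at hc

lemma state_step_letter {H : A → List A} {hne : ∀ a, H a ≠ []} (hm : MarkedSubst H hne)
    {x y : ℕ → A} {P Q : ℕ}
    (h : statePos H x P = statePos H y Q) (hl : substSeq H x (P + 1) = substSeq H y (Q + 1)) :
    statePos H x (P + 1) = statePos H y (Q + 1) := by
  by_cases hc : (locPos H x (P + 1)).2 = 0
  · have hc' : (locPos H y (Q + 1)).2 = 0 := by
      by_contra h'
      have := state_step_noncut h.symm h'
      simp only [statePos, Prod.mk.injEq] at this
      omega
    have e1 := substSeq_loc hne x (P + 1)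
    have e2 := substSeq_loc hne y (Q + 1)
    rw [hc] at e1
    rw [hc'] at e2
    simp only [statePos, Prod.mk.injEq]
    refine ⟨marked_head hm ?_, by omega⟩
    rw [e1, e2, hl]
  · exact state_step_noncut h hc

lemma loc_pred_pos {H : A → List A} {x : ℕ → A} {P j r : ℕ}
    (h : locPos H x (P + 1) = (j, r + 1)) : locPos H x P = (j, r) := by
  rw [locPos] at h
  split_ifs at h with h3
  · simp only [Prod.mk.injEq] at h
    exact Prod.ext h.1 (by omega)
  · simp at h

lemma loc_pred_zero {H : A → List A} (hne : ∀ a, H a ≠ []) {x : ℕ → A} {P j : ℕ}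
    (h : locPos H x (P + 1) = (j, 0)) :
    ∃ j', j = j' + 1 ∧ locPos H x P = (j', (H (x j')).length - 1) := by
  have h0 := (locPos_spec hne x P).1
  rw [locPos] at h
  split_ifs at h with h3
  · simp at h
  · simp only [Prod.mk.injEq] at h
    exact ⟨_, h.1.symm, Prod.ext rfl (by simp only; omega)⟩

/-- Backward synchronization. -/
lemma sync_back {H : A → List A} {hne : ∀ a, H a ≠ []} (hm : MarkedSubst H hne)
    (x y : ℕ → A) (i k : ℕ) (t : ℕ)
    (hag : ∀ s < t, substSeq H x (i + s) = substSeq H y (k + s))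
    (hr : (locPos H x (i + t)).2 = (locPos H y (k + t)).2)
    (hl : x (locPos H x (i + t)).1 = y (locPos H y (k + t)).1 ∨ (locPos H x (i + t)).2 = 0) :
    ∀ s < t, (locPos H x (i + s)).2 = (locPos H y (k + s)).2 ∧
      x (locPos H x (i + s)).1 = y (locPos H y (k + s)).1 := by
  induction t with
  | zero => intro s hs; omega
  | succ t ih =>
    have key : (locPos H x (i + t)).2 = (locPos H y (k + t)).2 ∧
      x (locPos H x (i + t)).1 = y (locPos H y (k + t)).1 := by
      rcases hq : locPos H x (i + t + 1) with ⟨j, r⟩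
      rcases hq' : locPos H y (k + t + 1) with ⟨j', r'⟩
      rw [← add_assoc, ← add_assoc, hq, hq'] at hr hl
      simp only at hr hl
      subst hr
      cases r with
      | succ r =>
        have e1 := loc_pred_pos hq
        have e2 := loc_pred_pos hq'
        rw [e1, e2]
        refine ⟨rfl, ?_⟩
        simpa using hl
      | zero =>
        obtain ⟨a, -, e1⟩ := loc_pred_zero hne hq
        obtain ⟨b, -, e2⟩ := loc_pred_zero hne hq'
        have f1 := substSeq_loc hne x (i + t)
        have f2 := substSeq_loc hne y (k + t)
        rw [← hag t (by omega), ← f1, e1, e2] at f2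
        simp only at f2
        have := marked_last hm f2
        rw [e1, e2]
        simp only
        rw [this]
        exact ⟨rfl, rfl⟩
    intro s hs
    rcases Nat.lt_succ_iff_lt_or_eq.mp hs with h | h
    · exact ih (fun s hs => hag s (by omega)) key.1 (Or.inl key.2) s h
    · subst h; exact key

/-- Forward synchronization. -/
lemma sync_fwd {H : A → List A} {hne : ∀ a, H a ≠ []} (hm : MarkedSubst H hne)
    (x y : ℕ → A) (i k : ℕ) (t T : ℕ)
    (hag : ∀ s ≤ T, substSeq H x (i + s) = substSeq H y (k + s))
    (h0 : statePos H x (i + t) = statePos H y (k + t)) :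
    ∀ s, t ≤ s → s ≤ T → statePos H x (i + s) = statePos H y (k + s) := by
  intro s hs
  induction s, hs using Nat.le_induction with
  | base => intro _; exact h0
  | succ s hs ih =>
    intro hsT
    exact state_step_letter hm (ih (by omega)) (hag (s + 1) hsT)

/-- Same states along an interval: block indices move in parallel. -/
lemma loc_parallel {H : A → List A} (x y : ℕ → A) (i k T : ℕ)
    (h : ∀ s ≤ T, statePos H x (i + s) = statePos H y (k + s)) :
    ∀ s ≤ T, (locPos H x (i + s)).1 + (locPos H y k).1 = (locPos H y (k + s)).1 + (locPos H x i).1 := by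
  intro s
  induction s with
  | zero => intro _; simp [add_comm]
  | succ s ih =>
    intro hs
    have ih := ih (by omega)
    have h1 := h s (by omega)
    simp only [statePos, Prod.mk.injEq] at h1
    rw [← add_assoc, ← add_assoc, locPos, locPos]
    rw [h1.1, h1.2]
    split_ifs
    · exact ih
    · simp only; omega

lemma sync_final {H : A → List A} {hne : ∀ a, H a ≠ []} (hm : MarkedSubst H hne)
    (x y : ℕ → A) (i k n T t : ℕ) (hi : i < (H (x 0)).length) (hn : i + T = cutPos H x n)
    (hag : ∀ s ≤ T, substSeq H x (i + s) = substSeq H y (k + s))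
    (htT : t ≤ T) (h1 : (locPos H x (i + t)).2 = 0) (h2 : (locPos H y (k + t)).2 = 0) :
    ∃ m, ∀ j < n + 1, x j = y (m + j) := by
  have hst : ∀ s ≤ T, statePos H x (i + s) = statePos H y (k + s) := by
    intro s hs
    rcases Nat.lt_or_ge s t with h | h
    · have := sync_back hm x y i k t (fun s hs => hag s (by omega)) (by omega) (Or.inr h1) s h
      exact Prod.ext this.2 this.1
    · refine sync_fwd hm x y i k t T hag ?_ s h hs
      have e1 := substSeq_loc hne x (i + t)
      have e2 := substSeq_loc hne y (k + t)
      rw [h1] at e1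
      rw [h2] at e2
      refine Prod.ext (marked_head hm ?_) (by simp only [statePos]; omega)
      simp only [statePos]
      rw [e1, e2, hag t htT]
  have hpar := loc_parallel x y i k T hst
  have h0 : locPos H x i = (0, i) := locPos_eq hne x hi (by simp [cutPos_zero])
  refine ⟨(locPos H y k).1, fun j hj => ?_⟩
  rcases Nat.eq_zero_or_pos j with rfl | hjp
  · have := hst 0 (by omega)
    simp only [statePos, Prod.mk.injEq, add_zero, h0] at this
    simpa using this.1
  · have hmono := (cutPos_strictMono hne x).monotone
    have l1 := hmono (show 1 ≤ j from hjp)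
    have l2 := hmono (show j ≤ n by omega)
    have l3 := cutPos_succ H x 0
    rw [cutPos_zero] at l3
    have hs : cutPos H x j - i ≤ T := by omega
    have e : i + (cutPos H x j - i) = cutPos H x j := by simp only [zero_add] at l3; omega
    have hl : locPos H x (cutPos H x j) = (j, 0) := locPos_eq hne x (len_pos hne _) rfl
    have p1 := hpar _ hs
    have p2 := hst _ hs
    simp only [statePos, Prod.mk.injEq] at p2
    rw [e, hl] at p1 p2
    rw [h0] at p1
    simp only [add_zero] at p1
    rw [p2.1, ← p1, add_comm]

/-- No shared cut: bounded period. -/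
lemma nosync_period [Fintype A] {H : A → List A} {hne : ∀ a, H a ≠ []} (hm : MarkedSubst H hne)
    (x y : ℕ → A) (i k T B M : ℕ) (hB : ∀ a, (H a).length ≤ B)
    (hM : (Fintype.card A * B) * (Fintype.card A * B) < M)
    (hag : ∀ s ≤ T, substSeq H x (i + s) = substSeq H y (k + s))
    (hns : ∀ t, 0 < t → t ≤ T → ¬ ((locPos H x (i + t)).2 = 0 ∧ (locPos H y (k + t)).2 = 0)) :
    ∃ p, 0 < p ∧ p ≤ M ∧ ∃ s0 ≤ M, ∀ s, s0 ≤ s → s + p ≤ T →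
      substSeq H y (k + s + p) = substSeq H y (k + s) := by
  classical
  let F : ℕ → (A × ℕ) × (A × ℕ) := fun s => (statePos H x (i + s), statePos H y (k + s))
  let S : Finset ((A × ℕ) × (A × ℕ)) :=
    (Finset.univ ×ˢ Finset.range B) ×ˢ (Finset.univ ×ˢ Finset.range B)
  have hcard : S.card = (Fintype.card A * B) * (Fintype.card A * B) := by
    simp [S, Finset.card_product]
  have hmaps : ∀ s ∈ Finset.range M, F s ∈ S := by
    intro s _
    simp only [S, F, statePos, Finset.mem_product, Finset.mem_univ, true_and, Finset.mem_range]
    exact ⟨(locPos_spec hne x _).1.trans_le (hB _), (locPos_spec hne y _).1.trans_le (hB _)⟩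
  obtain ⟨a, ha, b, hb, hab, hF⟩ := Finset.exists_ne_map_eq_of_card_lt_of_maps_to
    (by rw [hcard, Finset.card_range]; exact hM) hmaps
  simp only [Finset.mem_range] at ha hb
  wlog hlt : a < b generalizing a b
  · exact this b a hab.symm hF.symm hb ha (by omega)
  have key : ∀ s, a ≤ s → s + (b - a) ≤ T → F s = F (s + (b - a)) := by
    intro s hs
    induction s, hs using Nat.le_induction with
    | base => intro _; rw [hF]; congr 1; omega
    | succ s hs ih =>
      intro hsT
      have ih := ih (by omega)
      simp only [F, Prod.mk.injEq] at ih ⊢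
      obtain ⟨ih1, ih2⟩ := ih
      have e1 : i + (s + 1 + (b - a)) = i + (s + (b - a)) + 1 := by omega
      have e2 : k + (s + 1 + (b - a)) = k + (s + (b - a)) + 1 := by omega
      rw [e1, e2, ← add_assoc, ← add_assoc]
      have g1 := hag (s + 1) (by omega)
      have g2 := hag (s + (b - a) + 1) (by omega)
      simp only [← add_assoc] at g1 g2
      simp only [← add_assoc] at ih1 ih2 ⊢
      have hn := hns (s + 1) (by omega) (by omega)
      by_cases hc : (locPos H x (i + s + 1)).2 = 0
      · have hc' : (locPos H y (k + s + 1)).2 ≠ 0 := fun h' => hn ⟨hc, h'⟩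
        have q2 := state_step_noncut ih2 hc'
        refine ⟨state_step_letter hm ih1 ?_, q2⟩
        rw [g1, g2]
        exact state_letter hne q2
      · have q1 := state_step_noncut ih1 hc
        refine ⟨q1, state_step_letter hm ih2 ?_⟩
        rw [← g1, ← g2]
        exact state_letter hne q1
  refine ⟨b - a, by omega, by omega, a, by omega, fun s hs hsT => ?_⟩
  have := key s hs hsT
  simp only [F, Prod.mk.injEq] at this
  have := state_letter hne this.2
  rw [this, add_assoc]

/-- cut iteration for the fixed point -/
lemma cut_agree {H : A → List A} (hne : ∀ a, H a ≠ []) {u : ℕ → A} (hu : IsFixedPointSubst H u)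
    (m m' n : ℕ) (h : ∀ j < n, u (m + j) = u (m' + j)) :
    cutPos H u (m + n) + cutPos H u m' = cutPos H u (m' + n) + cutPos H u m ∧
      ∀ P, cutPos H u m + P < cutPos H u (m + n) →
        u (cutPos H u m + P) = u (cutPos H u m' + P) := by
  have h1 := agree_subst hne (fun j => u (m + j)) u m n (fun j _ => rfl)
  have h2 := agree_subst hne (fun j => u (m + j)) u m' n h
  rw [hu] at h1 h2
  refine ⟨by omega, fun P hP => ?_⟩
  rw [← h1.2 P (by omega), ← h2.2 P (by omega)]

lemma cut_agree_iter {H : A → List A} (hne : ∀ a, H a ≠ []) {u : ℕ → A}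
    (hu : IsFixedPointSubst H u) (s : ℕ) :
    ∀ m m' n : ℕ, (∀ j < n, u (m + j) = u (m' + j)) →
    (cutPos H u)^[s] (m + n) + (cutPos H u)^[s] m' = (cutPos H u)^[s] (m' + n) + (cutPos H u)^[s] m ∧
      ∀ P, (cutPos H u)^[s] m + P < (cutPos H u)^[s] (m + n) →
        u ((cutPos H u)^[s] m + P) = u ((cutPos H u)^[s] m' + P) := by
  induction s with
  | zero =>
    intro m m' n h
    refine ⟨by simp only [Function.iterate_zero, id]; omega, fun P hP => ?_⟩
    simp only [Function.iterate_zero, id] at hP ⊢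
    exact h P (by omega)
  | succ s ih =>
    intro m m' n h
    simp only [Function.iterate_succ, Function.comp]
    obtain ⟨h1, h2⟩ := cut_agree hne hu m m' n h
    have hmono := (cutPos_strictMono hne u).monotone
    have l1 := hmono (show m ≤ m + n by omega)
    have l2 := hmono (show m' ≤ m' + n by omega)
    have := ih (cutPos H u m) (cutPos H u m') (cutPos H u (m + n) - cutPos H u m)
      (fun j hj => h2 j (by omega))
    have e1 : cutPos H u m + (cutPos H u (m + n) - cutPos H u m) = cutPos H u (m + n) := by omega
    have e2 : cutPos H u m' + (cutPos H u (m + n) - cutPos H u m) = cutPos H u (m' + n) := by omega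
    rw [e1, e2] at this
    exact this

lemma factorAt_add (u : ℕ → A) (i n m : ℕ) :
    factorAt u i (n + m) = factorAt u i n ++ factorAt u (i + n) m := by
  simp only [factorAt, List.range_add, List.map_append, List.map_map]
  congr 1
  apply List.map_congr_left
  intro a _
  simp [add_assoc]

lemma factorAt_block {H : A → List A} (hne : ∀ a, H a ≠ []) {u : ℕ → A}
    (hu : IsFixedPointSubst H u) (m : ℕ) :
    H (u m) = factorAt u (cutPos H u m) (H (u m)).length := by
  apply List.ext_getElem?
  intro r
  rcases Nat.lt_or_ge r (H (u m)).length with h | h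
  · rw [substSeq_spec hne u m r h, hu]
    simp [factorAt, h]
  · rw [List.getElem?_eq_none h, List.getElem?_eq_none (by simp [factorAt, h])]

lemma wordMap_factorAt {H : A → List A} (hne : ∀ a, H a ≠ []) {u : ℕ → A}
    (hu : IsFixedPointSubst H u) (i n : ℕ) :
    wordMap H (factorAt u i n) =
      factorAt u (cutPos H u i) (cutPos H u (i + n) - cutPos H u i) := by
  induction n with
  | zero => simp [factorAt, wordMap]
  | succ n ih =>
    have hmono := (cutPos_strictMono hne u).monotone
    have l1 := hmono (show i ≤ i + n by omega)
    have e : cutPos H u (i + (n + 1)) - cutPos H u i =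
        (cutPos H u (i + n) - cutPos H u i) + (H (u (i + n))).length := by
      rw [← add_assoc, cutPos_succ]; omega
    rw [e, factorAt_add, factorAt_add, ← ih]
    have e2 : cutPos H u i + (cutPos H u (i + n) - cutPos H u i) = cutPos H u (i + n) := by omega
    rw [e2, ← factorAt_block hne hu]
    simp [wordMap, factorAt]

lemma cut_iter_strictMono {H : A → List A} (hne : ∀ a, H a ≠ []) (u : ℕ → A) (s : ℕ) :
    StrictMono (cutPos H u)^[s] := (cutPos_strictMono hne u).iterate s

lemma wordMap_iter {H : A → List A} (hne : ∀ a, H a ≠ []) {u : ℕ → A}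
    (hu : IsFixedPointSubst H u) (m s : ℕ) :
    (wordMap H)^[s] [u m] =
      factorAt u ((cutPos H u)^[s] m) ((cutPos H u)^[s] (m + 1) - (cutPos H u)^[s] m) := by
  induction s with
  | zero => simp [factorAt]
  | succ s ih =>
    rw [Function.iterate_succ_apply', ih, wordMap_factorAt hne hu]
    simp only [Function.iterate_succ_apply']
    have := (cut_iter_strictMono hne u s).monotone (show m ≤ m + 1 by omega)
    rw [show (cutPos H u)^[s] m + ((cutPos H u)^[s] (m + 1) - (cutPos H u)^[s] m) =
      (cutPos H u)^[s] (m + 1) by omega]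

lemma exists_occ {H : A → List A} (hne : ∀ a, H a ≠ []) (hprim : PrimitiveSubst H) {u : ℕ → A}
    (hu : IsFixedPointSubst H u) :
    ∃ k, ∀ m, ∃ q, (cutPos H u)^[k] m ≤ q ∧ q < (cutPos H u)^[k] (m + 1) ∧ u q = u 0 := by
  obtain ⟨k, -, hk⟩ := hprim
  refine ⟨k, fun m => ?_⟩
  have := hk (u m) (u 0)
  rw [wordMap_iter hne hu] at this
  simp only [factorAt, List.mem_map, List.mem_range] at this
  obtain ⟨a, ha, hb⟩ := this
  exact ⟨_, by omega, by omega, hb⟩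

lemma two_le_len [Fintype A] (hD : 2 ≤ Fintype.card A) {H : A → List A} (hne : ∀ a, H a ≠ [])
    (hprim : PrimitiveSubst H) {u : ℕ → A} (hu : IsFixedPointSubst H u) :
    2 ≤ (H (u 0)).length := by
  by_contra hlt
  have h1 : (H (u 0)).length = 1 := by
    have := len_pos hne (u 0)
    omega
  have hH : H (u 0) = [u 0] := by
    have := factorAt_block hne hu 0
    rw [h1, cutPos_zero] at this
    simpa [factorAt] using this
  obtain ⟨k, -, hk⟩ := hprim
  have hit : (wordMap H)^[k] [u 0] = [u 0] := by
    apply Function.iterate_fixed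
    simp [wordMap, hH]
  have : Subsingleton A := by
    refine ⟨fun a b => ?_⟩
    have ha := hk (u 0) a
    have hb := hk (u 0) b
    rw [hit] at ha hb
    simp at ha hb
    rw [ha, hb]
  have := Fintype.card_le_one_iff_subsingleton.mpr this
  omega

lemma cut_growth {H : A → List A} (hne : ∀ a, H a ≠ []) {u : ℕ → A}
    (h2 : 2 ≤ (H (u 0)).length) (s : ℕ) : s + 1 ≤ (cutPos H u)^[s] 1 := by
  have h : ∀ n, n + 2 ≤ cutPos H u (n + 1) := by
    intro n
    induction n with
    | zero => rw [cutPos_succ, cutPos_zero]; omega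
    | succ n ih =>
      rw [cutPos_succ]
      have := len_pos hne (u (n + 1))
      omega
  induction s with
  | zero => simp
  | succ s ih =>
    rw [Function.iterate_succ_apply']
    have := h ((cutPos H u)^[s] 1 - 1)
    rw [Nat.sub_add_cancel (by omega)] at this
    omega

lemma cut_zero_iter (H : A → List A) (u : ℕ → A) (s : ℕ) : (cutPos H u)^[s] 0 = 0 :=
  Function.iterate_fixed (cutPos_zero H u) s

lemma block_growth {H : A → List A} (hne : ∀ a, H a ≠ []) {u : ℕ → A}
    (hu : IsFixedPointSubst H u) (h2 : 2 ≤ (H (u 0)).length) (k : ℕ)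
    (hk : ∀ m, ∃ q, (cutPos H u)^[k] m ≤ q ∧ q < (cutPos H u)^[k] (m + 1) ∧ u q = u 0)
    (s m : ℕ) :
    ∃ q, (cutPos H u)^[s + k] m ≤ q ∧ q + (s + 1) ≤ (cutPos H u)^[s + k] (m + 1) ∧
      ∀ j < s + 1, u (q + j) = u j := by
  obtain ⟨q, h1, h3, h4⟩ := hk m
  have hmono := (cut_iter_strictMono hne u s).monotone
  have a1 := hmono h1
  have a2 := hmono (show q + 1 ≤ _ from h3)
  obtain ⟨b1, b2⟩ := cut_agree_iter hne hu s q 0 1 (fun j hj => by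
    have : j = 0 := by omega
    subst this; simpa using h4)
  have g := cut_growth hne h2 s
  rw [cut_zero_iter] at b1
  simp only [zero_add] at b1
  simp only [cut_zero_iter, zero_add] at b2
  simp only [Function.iterate_add_apply]
  exact ⟨_, a1, by omega, fun j hj => b2 j (by omega)⟩

lemma cut_bound {H : A → List A} {u : ℕ → A} (B : ℕ)
    (hB : ∀ a, (H a).length ≤ B) (m n : ℕ) : cutPos H u (m + n) ≤ cutPos H u m + B * n := by
  induction n with
  | zero => simp
  | succ n ih =>
    rw [← add_assoc, cutPos_succ]
    have := hB (u (m + n))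
    rw [mul_add]
    omega

lemma cut_bound_iter {H : A → List A} (hne : ∀ a, H a ≠ []) {u : ℕ → A} (B : ℕ)
    (hB : ∀ a, (H a).length ≤ B) (s m n : ℕ) :
    (cutPos H u)^[s] (m + n) ≤ (cutPos H u)^[s] m + B ^ s * n := by
  induction s with
  | zero => simp
  | succ s ih =>
    simp only [Function.iterate_succ_apply']
    refine ((cutPos_strictMono hne u).monotone ih).trans ?_
    refine (cut_bound B hB _ _).trans ?_
    rw [pow_succ]
    apply le_of_eq
    ring

lemma unif_rec {H : A → List A} (hne : ∀ a, H a ≠ []) {u : ℕ → A}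
    (hu : IsFixedPointSubst H u) (h2 : 2 ≤ (H (u 0)).length) (k : ℕ)
    (hk : ∀ m, ∃ q, (cutPos H u)^[k] m ≤ q ∧ q < (cutPos H u)^[k] (m + 1) ∧ u q = u 0)
    (B : ℕ) (hB : ∀ a, (H a).length ≤ B) (n : ℕ) :
    ∃ G, ∀ i, ∃ q, i ≤ q ∧ q ≤ i + G ∧ ∀ j < n, u (q + j) = u j := by
  classical
  refine ⟨2 * B ^ (n + k), fun i => ?_⟩
  have hex : ∃ m, i ≤ (cutPos H u)^[n + k] m := ⟨i, (cut_iter_strictMono hne u _).le_apply⟩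
  have hm1 : (cutPos H u)^[n + k] (Nat.find hex) ≤ i + B ^ (n + k) := by
    rcases hf : Nat.find hex with _ | m
    · rw [cut_zero_iter]; omega
    · have := Nat.find_min hex (m := m) (by omega)
      have b := cut_bound_iter hne (u := u) B hB (n + k) m 1
      omega
  obtain ⟨q, q1, q2, q3⟩ := block_growth hne hu h2 k hk n (Nat.find hex)
  have b := cut_bound_iter hne (u := u) B hB (n + k) (Nat.find hex) 1
  have := Nat.find_spec hex
  exact ⟨q, by omega, by omega, fun j hj => q3 j (by omega)⟩

lemma no_long_period {H : A → List A} {u : ℕ → A} (hu : IsFixedPointSubst H u)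
    (haper : AperiodicSubst H)
    (hrec : ∀ n, ∃ G, ∀ i, ∃ q, i ≤ q ∧ q ≤ i + G ∧ ∀ j < n, u (q + j) = u j) (M : ℕ) :
    ∃ N, ∀ p, 0 < p → p ≤ M → ∀ i, ¬ ∀ s < N, u (i + s + p) = u (i + s) := by
  induction M with
  | zero => exact ⟨0, fun p h1 h2 => by omega⟩
  | succ M ih =>
    obtain ⟨N, hN⟩ := ih
    have : ∃ n, u (n + (M + 1)) ≠ u n := by
      by_contra h
      push Not at h
      exact haper u hu ⟨M + 1, by omega, h⟩
    obtain ⟨n, hn⟩ := this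
    obtain ⟨G, hG⟩ := hrec (n + M + 2)
    refine ⟨max N (G + n + 1), fun p h1 h2 i hi => ?_⟩
    rcases Nat.lt_or_ge p (M + 1) with h | h
    · exact hN p h1 (by omega) i (fun s hs => hi s (lt_max_of_lt_left hs))
    · obtain rfl : p = M + 1 := by omega
      obtain ⟨q, q1, q2, q3⟩ := hG i
      have := hi (q - i + n) (lt_max_of_lt_right (by omega))
      rw [show i + (q - i + n) = q + n by omega] at this
      apply hn
      rw [← q3 n (by omega), ← q3 (n + (M + 1)) (by omega), ← this, add_assoc]

/-- the prefix of length `n` of `x` is in the language -/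
def InL (u x : ℕ → A) (n : ℕ) : Prop := ∃ k, ∀ j < n, x j = u (k + j)

lemma InL.mono {u x : ℕ → A} {m n : ℕ} (h : InL u x n) (hmn : m ≤ n) : InL u x m := by
  obtain ⟨k, hk⟩ := h
  exact ⟨k, fun j hj => hk j (by omega)⟩

lemma shift_iter (x : ℕ → A) (i j : ℕ) : shift^[i] x j = x (i + j) := by
  induction i generalizing x j with
  | zero => simp
  | succ i ih =>
    rw [Function.iterate_succ_apply, ih, shift]
    congr 1
    omega

lemma desubst [Fintype A] (hD : 2 ≤ Fintype.card A) {H : A → List A} {hne : ∀ a, H a ≠ []}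
    (hm : MarkedSubst H hne) (haper : AperiodicSubst H)
    (hprim : PrimitiveSubst H) {u : ℕ → A} (hu : IsFixedPointSubst H u) :
    ∃ N, ∀ (x : ℕ → A) (n i : ℕ), N ≤ n → i < (H (x 0)).length →
      InL u (shift^[i] (substSeq H x)) (cutPos H x n - i + 1) → InL u x (n + 1) := by
  obtain ⟨k, hk⟩ := exists_occ hne hprim hu
  have h2 := two_le_len hD hne hprim hu
  let B := ∑ a, (H a).length
  have hB : ∀ a, (H a).length ≤ B := fun a =>
    Finset.single_le_sum (f := fun a => (H a).length) (fun _ _ => Nat.zero_le _) (Finset.mem_univ a)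
  set M := (Fintype.card A * B) * (Fintype.card A * B) + 1 with hM
  obtain ⟨N, hN⟩ := no_long_period hu haper (unif_rec hne hu h2 k hk B hB) M
  refine ⟨N + 2 * M + 1, fun x n i hn hi hin => ?_⟩
  obtain ⟨q, hq⟩ := hin
  have hc : n - 1 + (H (x 0)).length ≤ cutPos H x n := by
    obtain ⟨n', rfl⟩ : ∃ n', n = n' + 1 := ⟨n - 1, by omega⟩
    clear hq hn
    induction n' with
    | zero => simp [cutPos_succ, cutPos_zero]
    | succ n' ih =>
      rw [cutPos_succ]
      have := len_pos hne (x (n' + 1))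
      omega
  have hag : ∀ s ≤ cutPos H x n - i, substSeq H x (i + s) = substSeq H u (q + s) := by
    intro s hs
    rw [← shift_iter (substSeq H x) i s, hq s (by omega), hu]
  by_cases hex : ∃ t, 0 < t ∧ t ≤ cutPos H x n - i ∧
      ((locPos H x (i + t)).2 = 0 ∧ (locPos H u (q + t)).2 = 0)
  · obtain ⟨t, -, t2, t3, t4⟩ := hex
    exact sync_final hm x u i q n _ t hi (by omega) hag t2 t3 t4
  · exfalso
    push Not at hex
    obtain ⟨p, p1, p2, s0, hs0, hp⟩ := nosync_period hm x u i q (cutPos H x n - i) B M hB (by omega)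
      hag (fun t t1 t2 h => hex t t1 t2 h.1 h.2)
    apply hN p p1 p2 (q + s0)
    intro s hs
    have := hp (s0 + s) (by omega) (by omega)
    rw [hu] at this
    rw [add_assoc q s0 s]
    exact this

/-- The incidence operator. -/
noncomputable def incOp (H : A → List A) : (A → ℝ) →ₗ[ℝ] (A → ℝ) where
  toFun v a := ((H a).map v).sum
  map_add' v w := by
    funext a
    simp only [Pi.add_apply]
    exact List.sum_map_add
  map_smul' c v := by
    funext a
    simp only [Pi.smul_apply, smul_eq_mul, RingHom.id_apply]
    exact List.sum_map_mul_left (f := v) (r := c) (l := H a)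

lemma incOp_apply (H : A → List A) (v : A → ℝ) (a : A) : incOp H v a = ((H a).map v).sum := rfl

lemma sum_wordMap (H : A → List A) (v : A → ℝ) (w : List A) :
    ((wordMap H w).map v).sum = (w.map (incOp H v)).sum := by
  induction w with
  | nil => simp [wordMap]
  | cons a w ih =>
    simp only [wordMap, List.flatMap_cons, List.map_append, List.sum_append, List.map_cons,
      List.sum_cons] at ih ⊢
    rw [ih, incOp_apply]

lemma sum_wordMap_iter (H : A → List A) (v : A → ℝ) (s : ℕ) (w : List A) :
    (((wordMap H)^[s] w).map v).sum = (w.map ((incOp H ^ s) v)).sum := by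
  induction s generalizing w with
  | zero => simp
  | succ s ih =>
    rw [Function.iterate_succ_apply, ih, sum_wordMap, pow_succ', Module.End.mul_apply]

lemma list_sum_pos (v : A → ℝ) (hv : ∀ a, 0 ≤ v a) (l : List A) (b : A) (hb : b ∈ l)
    (hvb : 0 < v b) : 0 < (l.map v).sum := by
  refine lt_of_lt_of_le hvb (List.single_le_sum ?_ _ (List.mem_map_of_mem hb))
  intro x hx
  obtain ⟨a, -, rfl⟩ := List.mem_map.mp hx
  exact hv a

lemma perron [Fintype A] [Nonempty A] {H : A → List A} (hprim : PrimitiveSubst H) :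
    ∃ (v : A → ℝ) (lam : ℝ), (∀ a, 0 < v a) ∧ 0 < lam ∧ ∀ a, ((H a).map v).sum = lam * v a := by
  classical
  obtain ⟨k, hk0, hk⟩ := hprim
  have hpos : ∀ z : A → ℝ, (∀ a, 0 ≤ z a) → z ≠ 0 → ∀ a, 0 < (incOp H ^ k) z a := by
    intro z hz hz0 a
    obtain ⟨b, hb⟩ : ∃ b, z b ≠ 0 := by
      by_contra h
      push Not at h
      exact hz0 (funext h)
    have := sum_wordMap_iter H z k [a]
    simp only [List.map_cons, List.map_nil, List.sum_cons, List.sum_nil, add_zero] at this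
    rw [← this]
    exact list_sum_pos z hz _ b (hk a b) (lt_of_le_of_ne (hz b) (Ne.symm hb))
  set B : ℝ := ∑ a, ((H a).length : ℝ) with hB
  have hbound : ∀ (t : ℝ) (w : A → ℝ), w ∈ stdSimplex ℝ A → (∀ a, t * w a ≤ incOp H w a) → t ≤ B := by
    intro t w hw h
    calc t = ∑ a, t * w a := by rw [← Finset.mul_sum, hw.2, mul_one]
      _ ≤ ∑ a, incOp H w a := Finset.sum_le_sum fun a _ => h a
      _ ≤ B := Finset.sum_le_sum fun a _ => by
          rw [incOp_apply]
          have := List.sum_le_card_nsmul ((H a).map w) 1 (by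
            intro x hx
            obtain ⟨b, -, rfl⟩ := List.mem_map.mp hx
            have := Finset.single_le_sum (f := w) (fun i _ => hw.1 i) (Finset.mem_univ b)
            rw [hw.2] at this
            exact this)
          simpa using this
  let C : Set (ℝ × (A → ℝ)) :=
    (Set.Icc 0 B ×ˢ stdSimplex ℝ A) ∩ {p | ∀ a, p.1 * p.2 a ≤ incOp H p.2 a}
  have hcont : Continuous (incOp H) := LinearMap.continuous_of_finiteDimensional _
  have hC : IsCompact C := by
    apply (isCompact_Icc.prod (isCompact_stdSimplex ℝ A)).inter_right
    rw [Set.setOf_forall]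
    apply isClosed_iInter
    intro a
    apply isClosed_le
    · exact continuous_fst.mul ((continuous_apply a).comp continuous_snd)
    · exact (continuous_apply a).comp (hcont.comp continuous_snd)
  have hnn : ∀ w : A → ℝ, (∀ a, 0 ≤ w a) → ∀ a, 0 ≤ incOp H w a := by
    intro w hw a
    rw [incOp_apply]
    apply List.sum_nonneg
    intro x hx
    obtain ⟨b, -, rfl⟩ := List.mem_map.mp hx
    exact hw b
  have hB0 : 0 ≤ B := Finset.sum_nonneg fun a _ => Nat.cast_nonneg _
  have hCne : C.Nonempty := by
    obtain ⟨a⟩ := ‹Nonempty A›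
    refine ⟨(0, Pi.single a 1), ⟨⟨le_rfl, hB0⟩, single_mem_stdSimplex ℝ a⟩, fun b => ?_⟩
    simp only [zero_mul]
    exact hnn _ (single_mem_stdSimplex ℝ a).1 b
  obtain ⟨⟨lam, v⟩, hmem, hmax⟩ := hC.exists_isMaxOn hCne continuous_fst.continuousOn
  obtain ⟨⟨hl, hv⟩, hle⟩ := hmem
  simp only [Set.mem_setOf_eq] at hle hl hv
  have hv0 : v ≠ 0 := by
    rintro rfl
    have := hv.2
    simp at this
  have hPv := hpos v hv.1 hv0
  have hz : incOp H v - lam • v = 0 := by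
    by_contra hz0
    have hP := hpos _ (fun a => by simpa using hle a) hz0
    set w := (incOp H ^ k) v with hw
    have hcomm : (incOp H ^ k) (incOp H v - lam • v) = incOp H w - lam • w := by
      rw [map_sub, map_smul, hw, ← Module.End.mul_apply, ← Module.End.mul_apply, ← pow_succ, ← pow_succ']
    rw [hcomm] at hP
    obtain ⟨a0, ha0⟩ := Finite.exists_min (fun a => (incOp H w a - lam * w a) / w a)
    have hS : 0 < ∑ a, w a := Finset.sum_pos (fun a _ => hPv a) Finset.univ_nonempty
    have he : 0 < (incOp H w a0 - lam * w a0) / w a0 := div_pos (by simpa using hP a0) (hPv a0)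
    set e := (incOp H w a0 - lam * w a0) / w a0
    have hsim : (∑ a, w a)⁻¹ • w ∈ stdSimplex ℝ A := by
      refine ⟨fun a => ?_, ?_⟩
      · simp only [Pi.smul_apply, smul_eq_mul]
        exact mul_nonneg (inv_nonneg.mpr hS.le) (hPv a).le
      · simp only [Pi.smul_apply, smul_eq_mul]
        rw [← Finset.mul_sum, inv_mul_cancel₀ hS.ne']
    have hineq : ∀ a, (lam + e) * ((∑ a, w a)⁻¹ • w) a ≤ incOp H ((∑ a, w a)⁻¹ • w) a := by
      intro a
      have := ha0 a
      rw [le_div_iff₀ (hPv a)] at this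
      rw [map_smul]
      simp only [Pi.smul_apply, smul_eq_mul]
      have h3 : (lam + e) * w a ≤ incOp H w a := by linarith
      have := mul_le_mul_of_nonneg_left h3 (inv_nonneg.mpr hS.le)
      linarith
    have hin : (lam + e, (∑ a, w a)⁻¹ • w) ∈ C :=
      ⟨⟨⟨by linarith [hl.1], hbound _ _ hsim hineq⟩, hsim⟩, hineq⟩
    have := hmax hin
    simp only [Set.mem_setOf_eq] at this
    linarith
  have heig : incOp H v = lam • v := sub_eq_zero.mp hz
  have hpow : ∀ s, (incOp H ^ s) v = lam ^ s • v := by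
    intro s
    induction s with
    | zero => simp
    | succ s ih =>
      rw [pow_succ', Module.End.mul_apply, ih, map_smul, heig, smul_smul, pow_succ]
  have hvp : ∀ a, 0 < lam ^ k * v a := by
    intro a
    have := hPv a
    rw [hpow] at this
    simpa using this
  have hlam : 0 < lam := by
    rcases hl.1.lt_or_eq with h | h
    · exact h
    · obtain ⟨a⟩ := ‹Nonempty A›
      have := hvp a
      rw [← h, zero_pow (by omega)] at this
      simp at this
  refine ⟨v, lam, fun a => ?_, hlam, fun a => ?_⟩
  · exact (mul_pos_iff_of_pos_left (pow_pos hlam k)).mp (hvp a)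
  · rw [← incOp_apply, heig]; simp

/-- weight of a prefix -/
noncomputable def wt (v : A → ℝ) (x : ℕ → A) (n : ℕ) : ℝ := ∑ j ∈ Finset.range n, v (x j)

open Classical in
/-- The basic potential. -/
noncomputable def basePot (v : A → ℝ) (u x : ℕ → A) : ℝ :=
  if h : ∃ n, ¬ InL u x n then
    Real.log (wt v x (Nat.find h - 1)) - Real.log (wt v x (Nat.find h - 1) - v (x 0))
  else 0

lemma basePot_eq (v : A → ℝ) {u x : ℕ → A} {n : ℕ} (h1 : InL u x n) (h2 : ¬ InL u x (n + 1)) :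
    basePot v u x = Real.log (wt v x n) - Real.log (wt v x n - v (x 0)) := by
  classical
  have h : ∃ n, ¬ InL u x n := ⟨_, h2⟩
  have hf : Nat.find h = n + 1 := by
    rw [Nat.find_eq_iff]
    exact ⟨h2, fun m hm hh => hh (h1.mono (by omega))⟩
  unfold basePot
  rw [dif_pos h, hf]
  simp

lemma basePot_zero (v : A → ℝ) {u x : ℕ → A} (h : ∀ n, InL u x n) : basePot v u x = 0 := by
  unfold basePot
  rw [dif_neg]
  push Not
  exact h

lemma inL_cases {u x : ℕ → A} {N : ℕ} (h : InL u x N) :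
    (∀ n, InL u x n) ∨ ∃ n, N ≤ n ∧ InL u x n ∧ ¬ InL u x (n + 1) := by
  classical
  by_cases hex : ∃ n, ¬ InL u x n
  · right
    have h1 := Nat.find_spec hex
    have h2 : N < Nat.find hex := by
      by_contra hh
      exact h1 (h.mono (not_lt.mp hh))
    refine ⟨Nat.find hex - 1, by omega, ?_, ?_⟩
    · have := Nat.find_min hex (m := Nat.find hex - 1) (by omega)
      push Not at this
      exact this
    · rw [Nat.sub_add_cancel (by omega)]
      exact h1
  · left
    push Not at hex
    exact hex

lemma wt_sub (v : A → ℝ) (x : ℕ → A) (n : ℕ) (c : ℝ) (hc : ∀ a, c ≤ v a) (hn : 1 ≤ n) :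
    c * (n - 1 : ℕ) ≤ wt v x n - v (x 0) := by
  obtain ⟨m, rfl⟩ : ∃ m, n = m + 1 := ⟨n - 1, by omega⟩
  unfold wt
  rw [Finset.sum_range_succ', add_sub_cancel_right]
  have := Finset.card_nsmul_le_sum (Finset.range m) (fun j => v (x (j + 1))) c (fun j _ => hc _)
  simp only [Finset.card_range, nsmul_eq_mul] at this
  rw [mul_comm]
  simpa using this

lemma basePot_bounds (v : A → ℝ) {u x : ℕ → A} {n : ℕ} (c d : ℝ) (hc0 : 0 < c)
    (hc : ∀ a, c ≤ v a) (hd : ∀ a, v a ≤ d) (hn : 2 ≤ n)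
    (h1 : InL u x n) (h2 : ¬ InL u x (n + 1)) :
    0 < basePot v u x ∧ basePot v u x ≤ d / (c * (n - 1 : ℕ)) := by
  rw [basePot_eq v h1 h2]
  have h3 := wt_sub v x n c hc (by omega)
  have h4 : 0 < c * (n - 1 : ℕ) := mul_pos hc0 (by exact_mod_cast (by omega : 0 < n - 1))
  have h5 := hc (x 0)
  have h6 := hd (x 0)
  set w := wt v x n
  set y := w - v (x 0) with hy
  have hy0 : 0 < y := by linarith
  have hw0 : 0 < w := by linarith
  refine ⟨by linarith [Real.log_lt_log hy0 (by linarith : y < w)], ?_⟩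
  rw [← Real.log_div hw0.ne' hy0.ne']
  have := Real.log_le_sub_one_of_pos (div_pos hw0 hy0)
  have e : w / y - 1 = v (x 0) / y := by field_simp; linarith
  rw [e] at this
  refine this.trans ?_
  gcongr
  linarith

lemma list_sum_range (f : ℕ → ℝ) (n : ℕ) :
    ((List.range n).map f).sum = ∑ i ∈ Finset.range n, f i := by
  induction n with
  | zero => simp
  | succ n ih => rw [List.range_succ, Finset.sum_range_succ, ← ih]; simp

lemma sum_block {H : A → List A} (hne : ∀ a, H a ≠ []) (v : A → ℝ) (x : ℕ → A) (n : ℕ) :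
    ∑ r ∈ Finset.range (H (x n)).length, v (substSeq H x (cutPos H x n + r)) =
      ((H (x n)).map v).sum := by
  rw [← list_sum_range]
  congr 1
  apply List.ext_getElem?
  intro r
  rcases Nat.lt_or_ge r (H (x n)).length with h | h
  · rw [List.getElem?_map, List.getElem?_map, substSeq_spec hne x n r h]
    simp [h]
  · rw [List.getElem?_eq_none (by simpa using h), List.getElem?_eq_none (by simpa using h)]

lemma wt_subst {H : A → List A} (hne : ∀ a, H a ≠ []) (v : A → ℝ) (lam : ℝ)
    (hv : ∀ a, ((H a).map v).sum = lam * v a) (x : ℕ → A) (n : ℕ) :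
    wt v (substSeq H x) (cutPos H x n) = lam * wt v x n := by
  induction n with
  | zero => simp [wt, cutPos_zero]
  | succ n ih =>
    unfold wt at ih ⊢
    rw [cutPos_succ, Finset.sum_range_add, ih, sum_block hne, hv, Finset.sum_range_succ]
    ring

lemma wt_shift (v : A → ℝ) (x : ℕ → A) (i n : ℕ) (h : i ≤ n) :
    wt v (shift^[i] x) (n - i) = wt v x n - wt v x i := by
  unfold wt
  simp only [shift_iter]
  obtain ⟨m, rfl⟩ : ∃ m, n = i + m := ⟨n - i, by omega⟩
  rw [Finset.sum_range_add]
  simp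

lemma inL_subst {H : A → List A} (hne : ∀ a, H a ≠ []) {u : ℕ → A} (hu : IsFixedPointSubst H u)
    {x : ℕ → A} {n : ℕ} (h : InL u x n) (i : ℕ) :
    InL u (shift^[i] (substSeq H x)) (cutPos H x n - i) := by
  obtain ⟨k, hk⟩ := h
  have := (agree_subst hne x u k n hk).2
  rw [hu] at this
  refine ⟨cutPos H u k + i, fun j hj => ?_⟩
  rw [shift_iter, this (i + j) (by omega)]
  congr 1
  omega

lemma inL_all_subst {H : A → List A} (hne : ∀ a, H a ≠ []) {u : ℕ → A}
    (hu : IsFixedPointSubst H u)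
    {x : ℕ → A} (h : ∀ n, InL u x n) (i n : ℕ) : InL u (shift^[i] (substSeq H x)) n := by
  refine (inL_subst hne hu (h (n + i)) i).mono ?_
  have : n + i ≤ cutPos H x (n + i) := (cutPos_strictMono hne x).le_apply
  omega

lemma renorm_basePot {H : A → List A} (hne : ∀ a, H a ≠ []) {u : ℕ → A}
    (hu : IsFixedPointSubst H u) (v : A → ℝ) (lam : ℝ) (hvp : ∀ a, 0 < v a) (hlam : 0 < lam)
    (hv : ∀ a, ((H a).map v).sum = lam * v a) (N : ℕ)
    (hN : ∀ (x : ℕ → A) (n i : ℕ), N ≤ n → i < (H (x 0)).length →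
      InL u (shift^[i] (substSeq H x)) (cutPos H x n - i + 1) → InL u x (n + 1))
    (x : ℕ → A) (hx : InL u x (N + 2)) : renorm H (basePot v u) x = basePot v u x := by
  rcases inL_cases hx with h | ⟨n, hn, h1, h2⟩
  · rw [basePot_zero v h]
    unfold renorm
    apply Finset.sum_eq_zero
    intro i _
    exact basePot_zero v (inL_all_subst hne hu h i)
  · have c1 : cutPos H x 1 = (H (x 0)).length := by rw [cutPos_succ, cutPos_zero, zero_add]
    have c2 : cutPos H x 1 < cutPos H x n := cutPos_strictMono hne x (by omega)
    set y := substSeq H x with hy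
    have key : ∀ i ∈ Finset.range (H (x 0)).length, basePot v u (shift^[i] y) =
        Real.log (wt v y (cutPos H x n) - wt v y i) -
          Real.log (wt v y (cutPos H x n) - wt v y (i + 1)) := by
      intro i hi
      rw [Finset.mem_range] at hi
      rw [basePot_eq v (inL_subst hne hu h1 i) (fun hh => h2 (hN x n i (by omega) hi hh)),
        wt_shift v y i _ (by omega), shift_iter, add_zero, sub_sub]
      congr 3
      unfold wt
      rw [Finset.sum_range_succ]
    unfold renorm
    rw [Finset.sum_congr rfl key, Finset.sum_range_sub', ← c1, wt_subst hne v lam hv,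
      wt_subst hne v lam hv, basePot_eq v h1 h2]
    have w0 : wt v y 0 = 0 := by simp [wt]
    have w1 : wt v x 1 = v (x 0) := by simp [wt]
    have hwn : wt v x 1 < wt v x n := by
      unfold wt
      exact Finset.sum_lt_sum_of_subset (Finset.range_mono (by omega)) (i := 1)
        (by simp; omega) (by simp) (hvp _) (fun j _ _ => (hvp _).le)
    have hw1 : 0 < wt v x 1 := by rw [w1]; exact hvp _
    rw [w0, sub_zero, ← mul_sub, Real.log_mul hlam.ne' (by linarith),
      Real.log_mul hlam.ne' (by linarith), w1]
    ring

/-- long prefix in the language, seen from iterated blocks -/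
def BlockAgree (H : A → List A) (u : ℕ → A) (m : ℕ) (y : ℕ → A) : Prop :=
  ∃ k r, k < (cutPos H u)^[m] r ∧ ∀ j, k + j < (cutPos H u)^[m] (r + 1) → y j = u (k + j)

lemma blockAgree_step {H : A → List A} (hne : ∀ a, H a ≠ []) {u : ℕ → A}
    (hu : IsFixedPointSubst H u) (m : ℕ) (y : ℕ → A) (h : BlockAgree H u m y) (i : ℕ)
    (hi : i < (H (y 0)).length) : BlockAgree H u (m + 1) (shift^[i] (substSeq H y)) := by
  obtain ⟨k, r, h1, h2⟩ := h
  have h3 : (cutPos H u)^[m] r < (cutPos H u)^[m] (r + 1) := cut_iter_strictMono hne u m (by omega)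
  have h0 := h2 0 (by omega)
  rw [add_zero] at h0
  refine ⟨cutPos H u k + i, r, ?_, fun j hj => ?_⟩
  · rw [Function.iterate_succ_apply']
    have := (cutPos_strictMono hne u).monotone (show k + 1 ≤ _ from h1)
    rw [cutPos_succ, ← h0] at this
    omega
  · rw [Function.iterate_succ_apply'] at hj
    obtain ⟨a1, a2⟩ := agree_subst hne y u k ((cutPos H u)^[m] (r + 1) - k)
      (fun j hj => h2 j (by omega))
    rw [show k + ((cutPos H u)^[m] (r + 1) - k) = (cutPos H u)^[m] (r + 1) by omega] at a1
    rw [shift_iter, a2 (i + j) (by omega), hu, add_assoc]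

lemma renorm_iter_congr {H : A → List A} (hne : ∀ a, H a ≠ []) {u : ℕ → A}
    (hu : IsFixedPointSubst H u) (m : ℕ) (f g : (ℕ → A) → ℝ)
    (hfg : ∀ y, BlockAgree H u m y → f y = g y) (x : ℕ → A) (hx : BlockAgree H u 0 x) :
    (renorm H)^[m] f x = (renorm H)^[m] g x := by
  induction m generalizing f g with
  | zero => exact hfg x hx
  | succ m ih =>
    rw [Function.iterate_succ_apply, Function.iterate_succ_apply]
    apply ih
    intro y hy
    unfold renorm
    apply Finset.sum_congr rfl
    intro i hi
    exact hfg _ (blockAgree_step hne hu m y hy i (Finset.mem_range.mp hi))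

lemma twoFull_blockAgree {H : A → List A} {u : ℕ → A} (h2 : TwoFull H u) (x : ℕ → A) :
    BlockAgree H u 0 x := by
  obtain ⟨i, hi⟩ := h2 [x 0, x 1] rfl
  refine ⟨i, i + 1, by simp, fun j hj => ?_⟩
  simp [factorAt, List.range_succ] at hi
  simp only [Function.iterate_zero, id] at hj
  obtain rfl | rfl : j = 0 ∨ j = 1 := by omega
  · simpa using hi.1
  · exact hi.2

section Top

variable [TopologicalSpace A] [DiscreteTopology A]

lemma cyl_mem_nhds (x : ℕ → A) (n : ℕ) : {y : ℕ → A | ∀ j < n, y j = x j} ∈ 𝓝 x := by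
  have : {y : ℕ → A | ∀ j < n, y j = x j} = (Set.Iio n).pi (fun j => {x j}) := by
    ext y; simp [Set.mem_pi]
  rw [this]
  exact set_pi_mem_nhds (Set.finite_Iio n) (fun j _ => by simp)

lemma exists_cyl {x : ℕ → A} {s : Set (ℕ → A)} (hs : s ∈ 𝓝 x) :
    ∃ n, ∀ y : ℕ → A, (∀ j < n, y j = x j) → y ∈ s := by
  classical
  rw [nhds_pi, Filter.mem_pi] at hs
  obtain ⟨I, hI, t, ht, hsub⟩ := hs
  obtain ⟨n, hn⟩ := hI.bddAbove
  refine ⟨n + 1, fun y hy => hsub fun i hi => ?_⟩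
  rw [hy i (Nat.lt_succ_of_le (hn hi))]
  exact mem_of_mem_nhds (ht i)

lemma mem_orbitClosure (u x : ℕ → A) : x ∈ orbitClosure u ↔ ∀ n, InL u x n := by
  unfold orbitClosure
  rw [mem_closure_iff_nhds]
  constructor
  · intro h n
    obtain ⟨y, hy, k, rfl⟩ := h _ (cyl_mem_nhds x n)
    exact ⟨k, fun j hj => by rw [← hy j hj, shift_iter]⟩
  · intro h t ht
    obtain ⟨n, hn⟩ := exists_cyl ht
    obtain ⟨k, hk⟩ := h n
    exact ⟨shift^[k] u, hn _ (fun j hj => by rw [hk j hj, shift_iter]), k, rfl⟩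

lemma continuous_of_cyl (f : (ℕ → A) → ℝ)
    (h : ∀ x, ∀ e > 0, ∃ n, ∀ y : ℕ → A, (∀ j < n, y j = x j) → |f y - f x| < e) :
    Continuous f := by
  rw [continuous_iff_continuousAt]
  intro x
  rw [ContinuousAt, Metric.tendsto_nhds]
  intro e he
  obtain ⟨n, hn⟩ := h x e he
  filter_upwards [cyl_mem_nhds x n] with y hy
  rw [Real.dist_eq]
  exact hn y hy

lemma continuous_renorm (H : A → List A) (V : (ℕ → A) → ℝ) (hV : Continuous V) :
    Continuous (renorm H V) := by
  apply continuous_of_cyl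
  intro x e he
  have hsh : ∀ i, ∃ n, ∀ y : ℕ → A, (∀ j < n, y j = x j) →
      |V (shift^[i] (substSeq H y)) - V (shift^[i] (substSeq H x))| <
        e / ((H (x 0)).length + 1) := by
    intro i
    have := Metric.continuous_iff'.mp hV (shift^[i] (substSeq H x)) (e / ((H (x 0)).length + 1))
      (by positivity)
    obtain ⟨n, hn⟩ := exists_cyl this
    refine ⟨i + n + 1, fun y hy => ?_⟩
    rw [← Real.dist_eq]
    apply hn
    intro j hj
    rw [shift_iter, shift_iter]
    unfold substSeq
    rw [hy 0 (by omega)]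
    congr 2
    apply List.map_congr_left
    intro a ha
    rw [List.mem_range] at ha
    exact hy a (by omega)
  choose g hg using hsh
  refine ⟨(∑ i ∈ Finset.range (H (x 0)).length, g i) + 1, fun y hy => ?_⟩
  unfold renorm
  rw [hy 0 (by omega), ← Finset.sum_sub_distrib]
  refine (Finset.abs_sum_le_sum_abs _ _).trans_lt ?_
  refine (Finset.sum_le_card_nsmul _ _ (e / ((H (x 0)).length + 1)) ?_).trans_lt ?_
  · intro i hi
    refine (hg i y fun j hj => hy j ?_).le
    have := Finset.single_le_sum (f := g) (fun _ _ => Nat.zero_le _) hi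
    omega
  · rw [Finset.card_range, nsmul_eq_mul, mul_div_assoc', div_lt_iff₀ (by positivity)]
    nlinarith

lemma InL.congr {u x y : ℕ → A} {n : ℕ} (h : InL u x n) (hxy : ∀ j < n, y j = x j) :
    InL u y n := by
  obtain ⟨k, hk⟩ := h
  exact ⟨k, fun j hj => by rw [hxy j hj, hk j hj]⟩

lemma continuous_basePot (v : A → ℝ) {u : ℕ → A} (c d : ℝ) (hc0 : 0 < c)
    (hc : ∀ a, c ≤ v a) (hd : ∀ a, v a ≤ d) (h2 : ∀ x, InL u x 2) :
    Continuous (basePot v u) := by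
  apply continuous_of_cyl
  intro x e he
  rcases inL_cases (h2 x) with h | ⟨n, hn, h3, h4⟩
  · obtain ⟨M, hM⟩ := exists_nat_gt (d / (c * e))
    refine ⟨M + 2, fun y hy => ?_⟩
    rw [basePot_zero v h, sub_zero]
    rcases inL_cases ((h (M + 2)).congr hy) with h' | ⟨n, hn, h3, h4⟩
    · rw [basePot_zero v h']; simpa using he
    · obtain ⟨b1, b2⟩ := basePot_bounds v c d hc0 hc hd (by omega) h3 h4
      rw [abs_of_pos b1]
      refine b2.trans_lt ?_
      have hMn : (M : ℝ) ≤ ((n - 1 : ℕ) : ℝ) := by exact_mod_cast (by omega : M ≤ n - 1)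
      have hn0 : (0 : ℝ) < ((n - 1 : ℕ) : ℝ) := by exact_mod_cast (by omega : 0 < n - 1)
      rw [div_lt_iff₀ (by positivity)]
      rw [div_lt_iff₀ (by positivity)] at hM
      have : (M : ℝ) * (c * e) ≤ ((n - 1 : ℕ) : ℝ) * (c * e) := by gcongr
      nlinarith
  · refine ⟨n + 1, fun y hy => ?_⟩
    have e1 : basePot v u y = basePot v u x := by
      rw [basePot_eq v h3 h4, basePot_eq v (h3.congr fun j hj => hy j (by omega))
        (fun hh => h4 (hh.congr fun j hj => (hy j hj).symm)), hy 0 (by omega)]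
      have : wt v y n = wt v x n := Finset.sum_congr rfl fun j hj => by
        rw [hy j (by have := Finset.mem_range.mp hj; omega)]
      rw [this]
    rw [e1]
    simpa using he

end Top

end Helpers

/-- For a 2-full, marked, aperiodic and primitive substitution `H`
(with fixed point `u` and attractor `K = orbitClosure u`), there is a continuous
`U : Aᴺ → ℝ` with `R(U) = U`, vanishing identically on `K` and positive off `K`. -/
theorem exists_fixed_potential
    {A : Type*} [Fintype A] [DecidableEq A] [TopologicalSpace A] [DiscreteTopology A]
    (hD : 2 ≤ Fintype.card A)
    (H : A → List A) (hne : ∀ a, H a ≠ [])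
    (hprim : PrimitiveSubst H) (haper : AperiodicSubst H)
    (hmarked : MarkedSubst H hne)
    (u : ℕ → A) (hu : IsFixedPointSubst H u) (h2full : TwoFull H u) :
    ∃ U : (ℕ → A) → ℝ, Continuous U ∧ renorm H U = U ∧
      (∀ x ∈ orbitClosure u, U x = 0) ∧
      (∀ x ∉ orbitClosure u, 0 < U x) := by
  classical
  haveI : Nonempty A := Fintype.card_pos_iff.mp (by omega)
  obtain ⟨v, lam, hvp, hlam, hv⟩ := perron hprim
  obtain ⟨N, hN⟩ := desubst hD hmarked haper hprim hu
  obtain ⟨k, hk⟩ := exists_occ hne hprim hu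
  have hlen := two_le_len hD hne hprim hu
  obtain ⟨a0, ha0⟩ := Finite.exists_min v
  obtain ⟨a1, ha1⟩ := Finite.exists_max v
  have h2 : ∀ x, InL u x 2 := by
    intro x
    obtain ⟨i, r, hi, h⟩ := twoFull_blockAgree h2full x
    simp only [Function.iterate_zero, id] at hi h
    exact ⟨i, fun j hj => h j (by omega)⟩
  set V := basePot v u with hV
  have hVc : Continuous V := continuous_basePot v (v a0) (v a1) (hvp a0) ha0 ha1 h2
  -- iterates are continuous, vanish on `K`, nonnegative and positive off `K`
  have hiter : ∀ m, Continuous ((renorm H)^[m] V) ∧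
      (∀ x, (∀ n, InL u x n) → (renorm H)^[m] V x = 0) ∧
      (∀ x, (¬ ∀ n, InL u x n) → 0 < (renorm H)^[m] V x) := by
    intro m
    induction m with
    | zero =>
      refine ⟨hVc, fun x hx => basePot_zero v hx, fun x hx => ?_⟩
      rcases inL_cases (h2 x) with h | ⟨n, hn, h3, h4⟩
      · exact absurd h hx
      · exact (basePot_bounds v (v a0) (v a1) (hvp a0) ha0 ha1 hn h3 h4).1
    | succ m ih =>
      obtain ⟨i1, i2, i3⟩ := ih
      rw [Function.iterate_succ_apply']
      refine ⟨continuous_renorm H _ i1, fun x hx => ?_, fun x hx => ?_⟩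
      · exact Finset.sum_eq_zero fun i _ => i2 _ (inL_all_subst hne hu hx i)
      · have hnn : ∀ y, 0 ≤ (renorm H)^[m] V y := by
          intro y
          by_cases hy : ∀ n, InL u y n
          · exact (i2 y hy).ge
          · exact (i3 y hy).le
        have h0 : (0 : ℕ) ∈ Finset.range (H (x 0)).length := Finset.mem_range.mpr (len_pos hne _)
        refine lt_of_lt_of_le (i3 (shift^[0] (substSeq H x)) ?_)
          (Finset.single_le_sum (f := fun i => (renorm H)^[m] V (shift^[i] (substSeq H x)))
            (fun i _ => hnn _) h0)
        intro hall
        apply hx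
        intro n
        exact (hN x (N + n) 0 (by omega) (len_pos hne _) (hall _)).mono (by omega)
  obtain ⟨j1, j2, j3⟩ := hiter (N + 2 + k)
  refine ⟨(renorm H)^[N + 2 + k] V, j1, ?_, fun x hx => j2 x ((mem_orbitClosure u x).mp hx),
    fun x hx => j3 x (fun h => hx ((mem_orbitClosure u x).mpr h))⟩
  funext x
  rw [← Function.iterate_succ_apply' (renorm H), Function.iterate_succ_apply]
  apply renorm_iter_congr hne hu _ _ _ _ x (twoFull_blockAgree h2full x)
  intro y hy
  apply renorm_basePot hne hu v lam hvp hlam hv N hN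
  obtain ⟨i, r, hi, h⟩ := hy
  obtain ⟨q, q1, q2, -⟩ := block_growth hne hu hlen k hk (N + 2) r
  exact ⟨i, fun j hj => h j (by omega)⟩
end

section
/- Let H be a 2-full, marked, aperiodic and primitive substitution over a finite alphabet A. There exists a continuous function U : A^ℕ → ℝ with R(U) = U such that the following holds. Let α > 0 and let V : A^ℕ → ℝ satisfy V ≡ 0 on K and, for every y ∉ K with δ(y) = p, V(y) = g(y)/p^α + h(y)/p^α, where g : A^ℕ → ℝ is continuous and positive and h : A^ℕ → ℝ is continuous with h ≡ 0 on K. Then for every x ∈ A^ℕ \ K: lim_{m→∞} R^m V(x) = 0 if α > 1; lim_{m→∞} R^m V(x) = +∞ if α < 1; and lim_{m→∞} R^m V(x) = (∫ g dμ_K) · U(x) if α = 1. -/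
open Filter Topology MeasureTheory

variable {A : Type*}

namespace RL

theorem shift_iter (x : ℕ → A) (i n : ℕ) : shift^[i] x n = x (i + n) := by
  induction i generalizing n with
  | zero => simp
  | succ i ih =>
    rw [Function.iterate_succ_apply', shift, ih]
    congr 1
    omega

theorem shift_add (x : ℕ → A) (i j : ℕ) : shift^[i] (shift^[j] x) = shift^[j + i] x := by
  ext n
  simp only [shift_iter]
  congr 1
  omega

/-- generic block decomposition of a position -/
theorem exists_block (p : ℕ → ℕ) (hp : ∀ i, 0 < p i) (k : ℕ) :
    ∃ i r, k = ∑ t ∈ Finset.range i, p t + r ∧ r < p i := by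
  induction k with
  | zero => exact ⟨0, 0, by simp, hp 0⟩
  | succ k ih =>
    obtain ⟨i, r, h1, h2⟩ := ih
    by_cases h : r + 1 < p i
    · exact ⟨i, r + 1, by omega, h⟩
    · refine ⟨i + 1, 0, ?_, hp _⟩
      rw [Finset.sum_range_succ]
      omega

theorem sum_mono (p : ℕ → ℕ) {i j : ℕ} (h : i ≤ j) :
    ∑ t ∈ Finset.range i, p t ≤ ∑ t ∈ Finset.range j, p t :=
  Finset.sum_le_sum_of_subset (Finset.range_mono h)

theorem block_lt (p : ℕ → ℕ) {i r n : ℕ}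
    (h : ∑ t ∈ Finset.range i, p t + r < ∑ t ∈ Finset.range n, p t) : i < n := by
  by_contra hc
  have := sum_mono p (not_lt.1 hc)
  omega

theorem sum_blocks {M : Type*} [AddCommMonoid M] (p : ℕ → ℕ) (f : ℕ → M) (n : ℕ) :
    ∑ i ∈ Finset.range n, ∑ k ∈ Finset.range (p i), f (∑ t ∈ Finset.range i, p t + k)
      = ∑ k ∈ Finset.range (∑ t ∈ Finset.range n, p t), f k := by
  induction n with
  | zero => simp
  | succ n ih => rw [Finset.sum_range_succ, ih, Finset.sum_range_succ p, Finset.sum_range_add]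

/-- position of the beginning of the `k`-th block of `H(x)` -/
def cut (H : A → List A) (x : ℕ → A) (k : ℕ) : ℕ := ∑ i ∈ Finset.range k, (H (x i)).length

theorem cut_succ (H : A → List A) (x : ℕ → A) (k : ℕ) :
    cut H x (k + 1) = cut H x k + (H (x k)).length := by
  simp [cut, Finset.sum_range_succ]

theorem cut_mono (H : A → List A) (x : ℕ → A) {i j : ℕ} (h : i ≤ j) : cut H x i ≤ cut H x j :=
  sum_mono _ h

theorem cut_add (H : A → List A) (x : ℕ → A) (i j : ℕ) :
    cut H x (i + j) = cut H x i + cut H (shift^[i] x) j := by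
  simp only [cut, Finset.sum_range_add, shift_iter]

theorem length_pfx (H : A → List A) (x : ℕ → A) (k : ℕ) :
    (wordMap H ((List.range k).map x)).length = cut H x k := by
  induction k with
  | zero => simp [wordMap, cut]
  | succ k ih =>
    rw [cut_succ, ← ih, List.range_succ]
    simp [wordMap]

theorem le_cut (H : A → List A) (hne : ∀ a, H a ≠ []) (x : ℕ → A) (k : ℕ) : k ≤ cut H x k := by
  induction k with
  | zero => simp
  | succ k ih =>
    rw [cut_succ]
    have := List.length_pos_iff.2 (hne (x k))
    omega

theorem sub_block (H : A → List A) (hne : ∀ a, H a ≠ []) (x : ℕ → A) (k r : ℕ)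
    (hr : r < (H (x k)).length) : substSeq H x (cut H x k + r) = (H (x k))[r] := by
  have hk := le_cut H hne x k
  unfold substSeq
  obtain ⟨t, ht⟩ : ∃ t, cut H x k + r + 1 = k + (1 + t) := ⟨cut H x k + r - k, by omega⟩
  rw [ht, List.range_add, List.map_append, List.range_add]
  have e : wordMap H (List.map x (List.range k) ++ List.map x (List.map (fun x ↦ k + x)
      (List.range 1 ++ List.map (fun x ↦ 1 + x) (List.range t))))
      = wordMap H ((List.range k).map x) ++ (H (x k) ++
        wordMap H (List.map x (List.map (fun x ↦ k + x) (List.map (fun x ↦ 1 + x) (List.range t))))) := by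
    simp [wordMap]
  rw [e, List.getD_append_right _ _ _ _ (by rw [length_pfx]; omega), length_pfx,
    Nat.add_sub_cancel_left, List.getD_append _ _ _ _ hr]
  simp [hr]

theorem sub_sum {M : Type*} [AddCommMonoid M] (H : A → List A) (hne : ∀ a, H a ≠ [])
    (f : A → M) (x : ℕ → A) (j : ℕ) :
    ∑ q ∈ Finset.range (cut H x j), f (substSeq H x q)
      = ∑ i ∈ Finset.range j, ((H (x i)).map f).sum := by
  induction j with
  | zero => simp [cut]
  | succ j ih =>
    rw [cut_succ, Finset.sum_range_add, ih, Finset.sum_range_succ]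
    congr 1
    rw [← Fin.sum_univ_fun_getElem, Finset.sum_range]
    refine Finset.sum_congr rfl fun i _ => ?_
    rw [sub_block H hne x j i i.2]

theorem block_ex (H : A → List A) (hne : ∀ a, H a ≠ []) (x : ℕ → A) (q : ℕ) :
    ∃ b r, q = cut H x b + r ∧ r < (H (x b)).length :=
  exists_block (fun i => (H (x i)).length) (fun i => List.length_pos_iff.2 (hne (x i))) q

theorem getElem_cg (H : A → List A) {a b : A} (h : a = b) {r s : ℕ} (hrs : r = s)
    (hr : r < (H a).length) (hs : s < (H b).length) : (H a)[r] = (H b)[s] := by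
  subst h; subst hrs; rfl

theorem sub_shift (H : A → List A) (hne : ∀ a, H a ≠ []) (x : ℕ → A) (k : ℕ) :
    shift^[cut H x k] (substSeq H x) = substSeq H (shift^[k] x) := by
  ext q
  obtain ⟨b, r, hq, hr⟩ := block_ex H hne (shift^[k] x) q
  have hr' : r < (H (x (k + b))).length := by rwa [shift_iter] at hr
  rw [hq, sub_block H hne _ _ _ hr, shift_iter, ← add_assoc, ← cut_add, sub_block H hne _ _ _ hr']
  exact getElem_cg H (shift_iter _ _ _).symm rfl _ _

theorem cut_agree (H : A → List A) {x x' : ℕ → A} {j : ℕ} (h : ∀ i < j, x i = x' i) :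
    cut H x j = cut H x' j :=
  Finset.sum_congr rfl fun i hi => by rw [h i (Finset.mem_range.1 hi)]

theorem sub_agree (H : A → List A) (hne : ∀ a, H a ≠ []) {x x' : ℕ → A} {j : ℕ}
    (h : ∀ i < j, x i = x' i) {q : ℕ} (hq : q < cut H x j) : substSeq H x q = substSeq H x' q := by
  obtain ⟨b, r, rfl, hr⟩ := block_ex H hne x q
  have hb : b < j := block_lt _ hq
  have hr' : r < (H (x' b)).length := by rwa [← h b hb]
  rw [sub_block H hne _ _ _ hr, cut_agree H (fun i hi => h i (lt_trans hi hb)),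
    sub_block H hne _ _ _ hr']
  exact getElem_cg H (h b hb) rfl _ _

/-- length of `H^m(a)` -/
def P (H : A → List A) : ℕ → A → ℕ
  | 0, _ => 1
  | m + 1, a => ((H a).map (P H m)).sum

/-- length of `H^m(z_0 ... z_{j-1})` -/
def len (H : A → List A) (m : ℕ) (z : ℕ → A) (j : ℕ) : ℕ := ∑ i ∈ Finset.range j, P H m (z i)

theorem len_one (H : A → List A) (m : ℕ) (z : ℕ → A) : len H m z 1 = P H m (z 0) := by simp [len]

theorem len_succ (H : A → List A) (m : ℕ) (z : ℕ → A) (j : ℕ) :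
    len H m z (j + 1) = len H m z j + P H m (z j) := by simp [len, Finset.sum_range_succ]

theorem len_mono (H : A → List A) (m : ℕ) (z : ℕ → A) {i j : ℕ} (h : i ≤ j) :
    len H m z i ≤ len H m z j := sum_mono _ h

theorem len_add (H : A → List A) (m : ℕ) (z : ℕ → A) (i j : ℕ) :
    len H m z (i + j) = len H m z i + len H m (shift^[i] z) j := by
  simp only [len, Finset.sum_range_add, shift_iter]

theorem len_sub (H : A → List A) (hne : ∀ a, H a ≠ []) (m : ℕ) (z : ℕ → A) (j : ℕ) :
    len H m (substSeq H z) (cut H z j) = len H (m + 1) z j := by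
  simp only [len, sub_sum H hne (P H m) z j, P]

theorem cut_one (H : A → List A) (z : ℕ → A) : cut H z 1 = (H (z 0)).length := by simp [cut]

theorem P_pos (H : A → List A) (hne : ∀ a, H a ≠ []) (m : ℕ) (a : A) : 0 < P H m a := by
  induction m generalizing a with
  | zero => simp [P]
  | succ m ih =>
    rw [P]
    obtain ⟨b, t, hb⟩ := List.exists_cons_of_ne_nil (hne a)
    rw [hb]
    simp only [List.map_cons, List.sum_cons]
    have := ih b
    omega

theorem len_zero_eq (H : A → List A) (z : ℕ → A) (j : ℕ) : len H 0 z j = j := by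
  simp [len, P]

theorem le_len (H : A → List A) (hne : ∀ a, H a ≠ []) (m : ℕ) (z : ℕ → A) (j : ℕ) :
    j ≤ len H m z j := by
  induction j with
  | zero => simp
  | succ k ih =>
    rw [len_succ]
    have := P_pos H hne m (z k)
    omega

theorem iter_shift (H : A → List A) (hne : ∀ a, H a ≠ []) (m : ℕ) (z : ℕ → A) (k : ℕ) :
    shift^[len H m z k] ((substSeq H)^[m] z) = (substSeq H)^[m] (shift^[k] z) := by
  induction m generalizing z k with
  | zero => simp [len_zero_eq]
  | succ m ih =>
    rw [Function.iterate_succ_apply, ← len_sub H hne, ih, sub_shift H hne,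
      Function.iterate_succ_apply]

theorem iter_shift' (H : A → List A) (hne : ∀ a, H a ≠ []) (m : ℕ) (z : ℕ → A) (k i : ℕ) :
    shift^[i] ((substSeq H)^[m] (shift^[k] z)) = shift^[len H m z k + i] ((substSeq H)^[m] z) := by
  rw [← iter_shift H hne, shift_add]

theorem len_block (H : A → List A) (hne : ∀ a, H a ≠ []) (m : ℕ) (z : ℕ → A) (q : ℕ) :
    ∃ b r, q = len H m z b + r ∧ r < P H m (z b) :=
  exists_block (fun i => P H m (z i)) (fun i => P_pos H hne m (z i)) q

theorem iter_agree (H : A → List A) (hne : ∀ a, H a ≠ []) (m : ℕ) {x x' : ℕ → A} {j : ℕ}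
    (h : ∀ i < j, x i = x' i) {q : ℕ} (hq : q < len H m x j) :
    (substSeq H)^[m] x q = (substSeq H)^[m] x' q := by
  induction m generalizing x x' j with
  | zero => rw [len_zero_eq] at hq; exact h q hq
  | succ m ih =>
    rw [← len_sub H hne] at hq
    exact ih (fun i hi => sub_agree H hne h hi) hq

/-- the prefix of length `n` of `z` is in the language of `u` -/
def InL (u z : ℕ → A) (n : ℕ) : Prop := ∃ p, ∀ s < n, z s = u (p + s)

theorem inL_iff (u z : ℕ → A) (n : ℕ) : prefixWord z n ∈ Lang u ↔ InL u z n := by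
  simp only [Lang, prefixWord, factorAt, InL, Set.mem_setOf_eq, List.length_map, List.length_range,
    List.map_inj_left, List.mem_range]

theorem InL.mono {u z : ℕ → A} {n k : ℕ} (h : InL u z n) (hk : k ≤ n) : InL u z k := by
  obtain ⟨p, hp⟩ := h
  exact ⟨p, fun s hs => hp s (by omega)⟩

theorem InL.drop {u z : ℕ → A} {n k : ℕ} (h : InL u z (k + n)) : InL u (shift^[k] z) n := by
  obtain ⟨p, hp⟩ := h
  refine ⟨p + k, fun s hs => ?_⟩
  rw [shift_iter, hp _ (by omega)]
  congr 1
  omega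

theorem iter_fix (H : A → List A) {u : ℕ → A} (hu : substSeq H u = u) (m : ℕ) :
    (substSeq H)^[m] u = u := Function.iterate_fixed hu m

theorem InL.iter (H : A → List A) (hne : ∀ a, H a ≠ []) {u : ℕ → A} (hu : substSeq H u = u)
    {z : ℕ → A} {j : ℕ} (h : InL u z j) (m : ℕ) : InL u ((substSeq H)^[m] z) (len H m z j) := by
  obtain ⟨p, hp⟩ := h
  refine ⟨len H m u p, fun s hs => ?_⟩
  have h1 : ∀ i < j, z i = (shift^[p] u) i := fun i hi => by rw [shift_iter, hp i hi]
  rw [iter_agree H hne m h1 hs, ← iter_shift H hne, shift_iter, iter_fix H hu]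

theorem renorm_iter (H : A → List A) (hne : ∀ a, H a ≠ []) (V : (ℕ → A) → ℝ) (m : ℕ) (z : ℕ → A) :
    (renorm H)^[m] V z = ∑ k ∈ Finset.range (P H m (z 0)), V (shift^[k] ((substSeq H)^[m] z)) := by
  induction m generalizing z with
  | zero => simp [P]
  | succ m ih =>
    rw [Function.iterate_succ_apply', renorm]
    simp only [ih]
    have h1 := sum_blocks (fun i => P H m (substSeq H z i))
      (fun k => V (shift^[k] ((substSeq H)^[m + 1] z))) (H (z 0)).length
    have h2 := len_sub H hne m z 1
    rw [cut_one, len_one] at h2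
    unfold len at h2
    rw [h2] at h1
    rw [← h1]
    refine Finset.sum_congr rfl fun i _ => ?_
    rw [shift_iter, add_zero]
    refine Finset.sum_congr rfl fun k _ => ?_
    rw [iter_shift' H hne, Function.iterate_succ_apply]
    rfl

end RL

namespace RL

theorem len_comp (H : A → List A) (hne : ∀ a, H a ≠ []) (m k : ℕ) (z : ℕ → A) (j : ℕ) :
    len H (m + k) z j = len H m ((substSeq H)^[k] z) (len H k z j) := by
  induction k generalizing z j with
  | zero => simp [len_zero_eq]
  | succ k ih =>
    rw [← add_assoc, ← len_sub H hne, ih, len_sub H hne, Function.iterate_succ_apply]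

theorem P_add (H : A → List A) (hne : ∀ a, H a ≠ []) (m k : ℕ) (z : ℕ → A) :
    P H (m + k) (z 0) = len H m ((substSeq H)^[k] z) (P H k (z 0)) := by
  rw [← len_one, len_comp H hne, len_one]

theorem P_succ_ge (H : A → List A) (hne : ∀ a, H a ≠ []) (m : ℕ) (a : A) :
    P H m a ≤ P H (m + 1) a := by
  have := P_add H hne 1 m (fun _ => a)
  rw [add_comm, this]
  exact le_len H hne _ _ _

theorem P_mono (H : A → List A) (hne : ∀ a, H a ≠ []) (a : A) : Monotone (fun m => P H m a) :=
  monotone_nat_of_le_succ fun m => P_succ_ge H hne m a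

theorem wordMap_pfx (H : A → List A) (hne : ∀ a, H a ≠ []) (z : ℕ → A) (j : ℕ) :
    wordMap H (prefixWord z j) = prefixWord (substSeq H z) (cut H z j) := by
  induction j with
  | zero => simp [wordMap, prefixWord, cut]
  | succ j ih =>
    have e : prefixWord z (j + 1) = prefixWord z j ++ [z j] := by
      simp [prefixWord, List.range_succ]
    have e2 : wordMap H (prefixWord z j ++ [z j]) = wordMap H (prefixWord z j) ++ H (z j) := by
      simp [wordMap]
    rw [e, e2, ih, cut_succ]
    simp only [prefixWord, List.range_add, List.map_append, List.append_cancel_left_eq]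
    apply List.ext_getElem
    · simp
    · intro n h1 h2
      simp [sub_block H hne z j n h1]

theorem wordMap_iter (H : A → List A) (hne : ∀ a, H a ≠ []) (m : ℕ) (z : ℕ → A) (j : ℕ) :
    (wordMap H)^[m] (prefixWord z j) = prefixWord ((substSeq H)^[m] z) (len H m z j) := by
  induction m generalizing z j with
  | zero => simp [len_zero_eq]
  | succ m ih =>
    rw [Function.iterate_succ_apply, wordMap_pfx H hne, ih, len_sub H hne,
      Function.iterate_succ_apply]

theorem mem_iter (H : A → List A) (hne : ∀ a, H a ≠ []) (k : ℕ) (z : ℕ → A) (b : A)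
    (h : b ∈ (wordMap H)^[k] [z 0]) : ∃ q < P H k (z 0), (substSeq H)^[k] z q = b := by
  have e : [z 0] = prefixWord z 1 := by simp [prefixWord]
  rw [e, wordMap_iter H hne, len_one] at h
  simpa [prefixWord] using h

theorem P_length (H : A → List A) (hne : ∀ a, H a ≠ []) (k : ℕ) (a : A) :
    ((wordMap H)^[k] [a]).length = P H k a := by
  have e : [a] = prefixWord (fun _ => a) 1 := by simp [prefixWord]
  rw [e, wordMap_iter H hne, len_one]
  simp [prefixWord]

theorem P_bound [Fintype A] (H : A → List A) (m : ℕ) : ∃ M, ∀ a, P H m a ≤ M :=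
  ⟨∑ a, P H m a, fun a => Finset.single_le_sum (f := fun a => P H m a)
    (fun _ _ => Nat.zero_le _) (Finset.mem_univ a)⟩

theorem len_le (H : A → List A) {m M : ℕ} (hM : ∀ a, P H m a ≤ M) (z : ℕ → A) (j : ℕ) :
    len H m z j ≤ j * M := by
  have := Finset.sum_le_card_nsmul (Finset.range j) (fun i => P H m (z i)) M (fun i _ => hM _)
  simpa [len] using this

theorem le_len' (H : A → List A) {m M : ℕ} (hM : ∀ a, M ≤ P H m a) (z : ℕ → A) (j : ℕ) :
    j * M ≤ len H m z j := by
  have := Finset.card_nsmul_le_sum (Finset.range j) (fun i => P H m (z i)) M (fun i _ => hM _)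
  simpa [len] using this

theorem P_prim_ge (H : A → List A) (hne : ∀ a, H a ≠ []) {k : ℕ}
    (hk : ∀ a b : A, b ∈ (wordMap H)^[k] [a]) (m : ℕ) (a b : A) : P H m b ≤ P H (m + k) a := by
  obtain ⟨q, hq, hb⟩ := mem_iter H hne k (fun _ => a) b (hk a b)
  have := P_add H hne m k (fun _ => a)
  rw [this]
  calc P H m b = P H m ((substSeq H)^[k] (fun _ => a) q) := by rw [hb]
    _ ≤ len H m ((substSeq H)^[k] (fun _ => a)) (q + 1) := by rw [len_succ]; omega
    _ ≤ _ := len_mono _ _ _ hq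

theorem P_growth [Fintype A] [DecidableEq A] (hD : 2 ≤ Fintype.card A) (H : A → List A)
    (hne : ∀ a, H a ≠ []) (hprim : PrimitiveSubst H) (n : ℕ) :
    ∃ N, ∀ m ≥ N, ∀ a, n ≤ P H m a := by
  obtain ⟨k, hk0, hk⟩ := hprim
  have h2 : ∀ a, 2 ≤ P H k a := fun a => by
    rw [← P_length H hne]
    refine hD.trans ?_
    have : (Finset.univ : Finset A) ⊆ ((wordMap H)^[k] [a]).toFinset := fun b _ => by
      simpa using hk a b
    exact (Finset.card_le_card this).trans (List.toFinset_card_le _)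
  have h3 : ∀ n a, 2 ^ n ≤ P H (k * n) a := by
    intro n
    induction n with
    | zero => simp [P]
    | succ n ih =>
      intro a
      have := P_add H hne (k * n) k (fun _ => a)
      rw [Nat.mul_succ, this, pow_succ, mul_comm]
      exact le_trans (Nat.mul_le_mul_right _ (h2 a)) (le_len' H ih _ _)
  refine ⟨k * n, fun m hm a => ?_⟩
  exact (Nat.lt_two_pow_self.le.trans (h3 n a)).trans (P_mono H hne a hm)

theorem unif_rec [Fintype A] [DecidableEq A] (hD : 2 ≤ Fintype.card A) (H : A → List A)
    (hne : ∀ a, H a ≠ []) (hprim : PrimitiveSubst H) {u : ℕ → A} (hu : substSeq H u = u) (m : ℕ) :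
    ∃ R, ∀ p, ∃ s, s + m ≤ R ∧ ∀ t < m, u (p + s + t) = u t := by
  obtain ⟨r, hr⟩ := P_growth hD H hne hprim m
  obtain ⟨k, hk0, hk⟩ := hprim
  obtain ⟨M, hM⟩ := P_bound H (r + k)
  refine ⟨2 * M, fun p => ?_⟩
  obtain ⟨b, w, hb, hw⟩ := len_block H hne (r + k) u p
  obtain ⟨q, hq, hq2⟩ := mem_iter H hne k (shift^[b + 1] u) (u 0) (hk _ _)
  rw [← iter_shift H hne, iter_fix H hu, shift_iter] at hq2
  rw [shift_iter, add_zero] at hq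
  set c := len H k u (b + 1) + q with hc
  have h1 : len H (r + k) u (b + 1) ≤ len H r u c := by
    rw [len_comp H hne, iter_fix H hu]
    exact len_mono _ _ _ (by omega)
  have h2 : len H r u (c + 1) ≤ len H (r + k) u (b + 1 + 1) := by
    rw [len_comp H hne, iter_fix H hu]
    refine len_mono _ _ _ ?_
    rw [len_succ H k u (b + 1)]
    omega
  have h3 := hr r le_rfl (u c)
  have h4 := hM (u b)
  have h5 := hM (u (b + 1))
  rw [len_succ] at h2
  rw [len_succ, len_succ] at h2
  rw [len_succ] at h1
  refine ⟨len H r u c - p, by omega, fun t ht => ?_⟩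
  have e : p + (len H r u c - p) + t = len H r u c + t := by omega
  rw [e, ← shift_iter u (len H r u c)]
  have h6 := iter_shift H hne r u c
  rw [iter_fix H hu] at h6
  rw [h6]
  have h7 := iter_agree H hne r (x := shift^[c] u) (x' := u) (j := 1) (q := t)
    (fun i hi => by
      have : i = 0 := by omega
      subst this
      rw [shift_iter, add_zero, hq2])
    (by rw [len_one, shift_iter, add_zero]; omega)
  rw [h7, iter_fix H hu]

/-- position `q` of `H(x)` is the `r`-th letter of a block `H(a)` -/
def At (H : A → List A) (x : ℕ → A) (q : ℕ) (a : A) (r : ℕ) : Prop :=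
  ∃ b, q = cut H x b + r ∧ x b = a ∧ r < (H a).length

theorem at_ex (H : A → List A) (hne : ∀ a, H a ≠ []) (x : ℕ → A) (q : ℕ) :
    ∃ w : A × ℕ, At H x q w.1 w.2 := by
  obtain ⟨b, r, h1, h2⟩ := block_ex H hne x q
  exact ⟨(x b, r), b, h1, rfl, h2⟩

theorem block_unique (H : A → List A) (x : ℕ → A) {b r b' r' : ℕ}
    (h : cut H x b + r = cut H x b' + r') (h1 : r < (H (x b)).length)
    (h2 : r' < (H (x b')).length) : b = b' ∧ r = r' := by
  rcases lt_trichotomy b b' with hb | hb | hb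
  · have := cut_mono H x (Nat.succ_le_of_lt hb)
    rw [Nat.succ_eq_add_one, cut_succ] at this
    omega
  · subst hb
    exact ⟨rfl, by omega⟩
  · have := cut_mono H x (Nat.succ_le_of_lt hb)
    rw [Nat.succ_eq_add_one, cut_succ] at this
    omega

theorem At.unique {H : A → List A} {x : ℕ → A} {q : ℕ} {a a' : A} {r r' : ℕ}
    (h : At H x q a r) (h' : At H x q a' r') : a = a' ∧ r = r' := by
  obtain ⟨b, h1, rfl, h3⟩ := h
  obtain ⟨b', h1', rfl, h3'⟩ := h'
  obtain ⟨rfl, h5⟩ := block_unique H x (h1.symm.trans h1') h3 h3'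
  exact ⟨rfl, h5⟩

theorem At.val {H : A → List A} (hne : ∀ a, H a ≠ []) {x : ℕ → A} {q : ℕ} {a : A} {r : ℕ}
    (h : At H x q a r) : (H a)[r]? = some (substSeq H x q) := by
  obtain ⟨b, rfl, rfl, h3⟩ := h
  rw [sub_block H hne x b r h3, List.getElem?_eq_getElem h3]

theorem At.next {H : A → List A} {x : ℕ → A} {q : ℕ} {a : A} {r : ℕ}
    (h : At H x q a r) (hr : r + 1 < (H a).length) : At H x (q + 1) a (r + 1) := by
  obtain ⟨b, rfl, rfl, h3⟩ := h
  exact ⟨b, by omega, rfl, hr⟩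

theorem At.next' {H : A → List A} (hne : ∀ a, H a ≠ []) {x : ℕ → A} {q : ℕ} {a : A} {r : ℕ}
    (h : At H x q a r) (hr : ¬ r + 1 < (H a).length) : ∃ a', At H x (q + 1) a' 0 := by
  obtain ⟨b, rfl, rfl, h3⟩ := h
  exact ⟨x (b + 1), b + 1, by rw [cut_succ]; omega, rfl, List.length_pos_iff.2 (hne _)⟩

theorem mark_first {H : A → List A} {hne : ∀ a, H a ≠ []} (hm : MarkedSubst H hne) {a b : A}
    (h : (H a)[0]? = (H b)[0]?) : a = b := by
  apply hm.1
  rw [← List.head?_eq_getElem?, ← List.head?_eq_getElem?, List.head?_eq_some_head (hne a),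
    List.head?_eq_some_head (hne b)] at h
  simpa using h

theorem mark_last {H : A → List A} {hne : ∀ a, H a ≠ []} (hm : MarkedSubst H hne) {a b : A}
    (h : (H a)[(H a).length - 1]? = (H b)[(H b).length - 1]?) : a = b := by
  apply hm.2
  rw [← List.getLast?_eq_getElem?, ← List.getLast?_eq_getElem?, List.getLast?_eq_some_getLast (hne a),
    List.getLast?_eq_some_getLast (hne b)] at h
  simpa using h

theorem step_one {H : A → List A} {hne : ∀ a, H a ≠ []} (hm : MarkedSubst H hne) {x : ℕ → A}
    {q q' : ℕ} {a a1 a1' : A} {r r1 r1' : ℕ} (h1 : At H x q a r) (h2 : At H x q' a r)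
    (h3 : At H x (q + 1) a1 r1) (h4 : At H x (q' + 1) a1' r1')
    (hv : substSeq H x (q + 1) = substSeq H x (q' + 1)) : a1 = a1' ∧ r1 = r1' := by
  by_cases hr : r + 1 < (H a).length
  · obtain ⟨e1, e2⟩ := (h1.next hr).unique h3
    obtain ⟨e3, e4⟩ := (h2.next hr).unique h4
    exact ⟨e1.symm.trans e3, e2.symm.trans e4⟩
  · obtain ⟨c, hc⟩ := h1.next' hne hr
    obtain ⟨c', hc'⟩ := h2.next' hne hr
    obtain ⟨rfl, rfl⟩ := hc.unique h3
    obtain ⟨rfl, rfl⟩ := hc'.unique h4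
    refine ⟨mark_first hm ?_, rfl⟩
    rw [hc.val hne, hc'.val hne, hv]

/-- no common cutting point implies that the joint parsing state is deterministic -/
theorem step_two {H : A → List A} {hne : ∀ a, H a ≠ []} (hm : MarkedSubst H hne) {x x' : ℕ → A}
    {q q' w w' : ℕ} {a b a1 a1' b1 b1' : A} {r s r1 r1' s1 s1' : ℕ}
    (h1 : At H x q a r) (h2 : At H x q' a r)
    (h3 : At H x (q + 1) a1 r1) (h4 : At H x (q' + 1) a1' r1')
    (k1 : At H x' w b s) (k2 : At H x' w' b s)
    (k3 : At H x' (w + 1) b1 s1) (k4 : At H x' (w' + 1) b1' s1')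
    (hv : substSeq H x (q + 1) = substSeq H x' (w + 1))
    (hv' : substSeq H x (q' + 1) = substSeq H x' (w' + 1))
    (hn : ¬ (r1 = 0 ∧ s1 = 0)) : (a1 = a1' ∧ r1 = r1') ∧ (b1 = b1' ∧ s1 = s1') := by
  have key : substSeq H x (q + 1) = substSeq H x (q' + 1) := by
    by_cases hr : r + 1 < (H a).length
    · have e1 := (h1.next hr).val hne
      have e2 := (h2.next hr).val hne
      exact Option.some.inj (e1.symm.trans e2)
    · by_cases hs : s + 1 < (H b).length
      · have e1 := (k1.next hs).val hne
        have e2 := (k2.next hs).val hne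
        rw [hv, hv']
        exact Option.some.inj (e1.symm.trans e2)
      · exfalso
        obtain ⟨c, hc⟩ := h1.next' hne hr
        obtain ⟨c', hc'⟩ := k1.next' hne hs
        exact hn ⟨(hc.unique h3).2.symm, (hc'.unique k3).2.symm⟩
  exact ⟨step_one hm h1 h2 h3 h4 key, step_one hm k1 k2 k3 k4 (by rw [← hv, ← hv', key])⟩

theorem periodic_of_nosync [Fintype A] {H : A → List A} {hne : ∀ a, H a ≠ []}
    (hm : MarkedSubst H hne) : ∃ S, ∀ (x x' : ℕ → A) (i p n : ℕ),
      S < n → (∀ s < n, substSeq H x (i + s) = substSeq H x' (p + s)) →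
      (∀ s < n, ∀ a b, 0 < s → ¬ (At H x (i + s) a 0 ∧ At H x' (p + s) b 0)) →
      ∃ s t, s < t ∧ t ≤ S ∧
        ∀ r, t + r < n → substSeq H x (i + s + r) = substSeq H x (i + t + r) := by
  classical
  obtain ⟨M, hM⟩ : ∃ M, ∀ a, (H a).length ≤ M :=
    ⟨∑ a, (H a).length, fun a => Finset.single_le_sum (f := fun a => (H a).length)
      (fun _ _ => Nat.zero_le _) (Finset.mem_univ a)⟩
  refine ⟨Fintype.card ((A × Fin M) × (A × Fin M)), fun x x' i p n hn hxx hnc => ?_⟩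
  choose f hf using at_ex H hne x
  choose g hg using at_ex H hne x'
  have hf' : ∀ q, (f q).2 < M := fun q => by
    obtain ⟨b, _, _, h⟩ := hf q
    exact h.trans_le (hM _)
  have hg' : ∀ q, (g q).2 < M := fun q => by
    obtain ⟨b, _, _, h⟩ := hg q
    exact h.trans_le (hM _)
  let T : Fin (Fintype.card ((A × Fin M) × (A × Fin M)) + 1) → (A × Fin M) × (A × Fin M) :=
    fun s => (((f (i + s)).1, ⟨(f (i + s)).2, hf' _⟩), ((g (p + s)).1, ⟨(g (p + s)).2, hg' _⟩))
  obtain ⟨s, t, hst, hT⟩ := Fintype.exists_ne_map_eq_of_card_lt T (by simp)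
  wlog hlt : s < t generalizing s t
  · exact this t s hst.symm hT.symm (lt_of_le_of_ne (not_lt.1 hlt) hst.symm)
  have hlt' : (s : ℕ) < t := hlt
  have ht' : (t : ℕ) ≤ Fintype.card ((A × Fin M) × (A × Fin M)) := Nat.lt_succ_iff.1 t.2
  refine ⟨s, t, hlt', ht', ?_⟩
  have key : ∀ r, t + r < n → f (i + s + r) = f (i + t + r) ∧ g (p + s + r) = g (p + t + r) := by
    intro r
    induction r with
    | zero =>
      intro _
      simp only [T, Prod.mk.injEq, Fin.mk.injEq] at hT
      exact ⟨Prod.ext hT.1.1 hT.1.2, Prod.ext hT.2.1 hT.2.2⟩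
    | succ r ih =>
      intro hr
      obtain ⟨e1, e2⟩ := ih (by omega)
      have a1 := hf (i + s + r)
      have b1 := hg (p + s + r)
      rw [e1] at a1
      rw [e2] at b1
      have := step_two hm a1 (hf (i + t + r)) (hf (i + s + r + 1)) (hf (i + t + r + 1))
        b1 (hg (p + t + r)) (hg (p + s + r + 1)) (hg (p + t + r + 1))
        (by have := hxx (s + r + 1) (by omega); simpa only [add_assoc] using this)
        (by have := hxx (t + r + 1) (by omega); simpa only [add_assoc] using this)
        (fun hh => by
          have c1 := hf (i + s + r + 1)
          have c2 := hg (p + s + r + 1)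
          rw [hh.1] at c1
          rw [hh.2] at c2
          exact hnc (s + r + 1) (by omega) _ _ (by omega)
            ⟨by simpa only [add_assoc] using c1, by simpa only [add_assoc] using c2⟩)
      exact ⟨Prod.ext this.1.1 this.1.2, Prod.ext this.2.1 this.2.2⟩
  intro r hr
  have a1 := (hf (i + s + r)).val hne
  have a2 := (hf (i + t + r)).val hne
  rw [(key r hr).1, a2] at a1
  exact (Option.some.inj a1).symm

theorem sync [Fintype A] [DecidableEq A] (hD : 2 ≤ Fintype.card A) {H : A → List A}
    {hne : ∀ a, H a ≠ []} (hprim : PrimitiveSubst H) (haper : AperiodicSubst H)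
    (hm : MarkedSubst H hne) {u : ℕ → A} (hu : substSeq H u = u) :
    ∃ l, ∀ (x : ℕ → A) (i p n : ℕ), l ≤ n →
      (∀ s < n, substSeq H x (i + s) = u (p + s)) →
      ∃ s < n, 0 < s ∧ ∃ a b, At H x (i + s) a 0 ∧ At H u (p + s) b 0 := by
  obtain ⟨S, hS⟩ := periodic_of_nosync hm
  have hnp : ∃ n0, u (n0 + S.factorial) ≠ u n0 := by
    by_contra hc
    push Not at hc
    exact haper u hu ⟨S.factorial, Nat.factorial_pos S, hc⟩
  obtain ⟨n0, hn0⟩ := hnp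
  obtain ⟨R, hR⟩ := unif_rec hD H hne hprim hu (n0 + S.factorial + 1)
  refine ⟨S + 1 + R, fun x i p n hn hx => ?_⟩
  by_contra hc
  push Not at hc
  obtain ⟨s, t, hst, htS, hper⟩ := hS x u i p n (by omega) (by rwa [hu])
    (fun s hs a b h0 hh => hc s hs h0 a b hh.1 hh.2)
  have hper1 : ∀ r, t + r < n → u (p + s + r) = u (p + s + r + (t - s)) := fun r hr => by
    have h1 := hx (s + r) (by omega)
    have h2 := hx (t + r) (by omega)
    have h3 := hper r hr
    have e : p + s + r + (t - s) = p + (t + r) := by omega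
    rw [e, ← h2, ← add_assoc, ← h3, add_assoc p, ← h1, add_assoc]
  have hper2 : ∀ c r, s + r + c * (t - s) < n → u (p + s + r) = u (p + s + r + c * (t - s)) := by
    intro c
    induction c with
    | zero => simp
    | succ c ih =>
      intro r hr
      rw [Nat.succ_mul] at hr
      rw [ih r (by omega), Nat.succ_mul]
      have := hper1 (r + c * (t - s)) (by omega)
      simpa only [add_assoc] using this
  obtain ⟨c, hc'⟩ : (t - s) ∣ S.factorial := Nat.dvd_factorial (by omega) (by omega)
  obtain ⟨w, hw1, hw2⟩ := hR (p + s)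
  have e1 := hw2 n0 (by omega)
  have e2 := hw2 (n0 + S.factorial) (by omega)
  have e3 := hper2 c (w + n0) (by rw [mul_comm c, ← hc']; omega)
  rw [mul_comm c, ← hc'] at e3
  apply hn0
  rw [← e1, ← e2]
  simp only [← add_assoc] at e3 ⊢
  exact e3.symm

theorem back {H : A → List A} {hne : ∀ a, H a ≠ []} (hm : MarkedSubst H hne)
    {x x' : ℕ → A} {i p n : ℕ} (hi : i < (H (x 0)).length)
    (hx : ∀ s < n, substSeq H x (i + s) = substSeq H x' (p + s)) (b : ℕ) :
    ∀ b', i < cut H x b → cut H x b + p = cut H x' b' + i → cut H x b ≤ i + n →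
      b ≤ b' ∧ ∀ t < b, x t = x' (b' - b + t) := by
  induction b with
  | zero => intro b' h; simp [cut] at h
  | succ b ih =>
    intro b' h1 h2 h3
    obtain ⟨c, rfl⟩ : ∃ c, b' = c + 1 := by
      rcases b' with _ | c
      · simp only [cut, Finset.range_zero, Finset.sum_empty] at h2
        simp only [cut] at h1
        omega
      · exact ⟨c, rfl⟩
    have hl1 := List.length_pos_iff.2 (hne (x b))
    have hl2 := List.length_pos_iff.2 (hne (x' c))
    rw [cut_succ] at h1 h2 h3
    rw [cut_succ] at h2
    have heq : x b = x' c := by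
      apply mark_last hm
      have v1 := At.val hne (H := H) (x := x) ⟨b, rfl, rfl, Nat.sub_lt hl1 one_pos⟩
      have v2 := At.val hne (H := H) (x := x') ⟨c, rfl, rfl, Nat.sub_lt hl2 one_pos⟩
      rw [v1, v2]
      congr 1
      have := hx (cut H x b + ((H (x b)).length - 1) - i) (by omega)
      have e1 : i + (cut H x b + ((H (x b)).length - 1) - i) = cut H x b + ((H (x b)).length - 1) := by
        omega
      have e2 : p + (cut H x b + ((H (x b)).length - 1) - i)
        = cut H x' c + ((H (x' c)).length - 1) := by omega
      rwa [e1, e2] at this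
    rcases Nat.eq_zero_or_pos b with hb | hb
    · subst hb
      refine ⟨by omega, fun t ht => ?_⟩
      have : t = 0 := by omega
      subst this
      simpa using heq
    · have hc1 : cut H x 1 ≤ cut H x b := cut_mono H x hb
      rw [cut_one] at hc1
      rw [heq] at h2 h3
      obtain ⟨h4, h5⟩ := ih c (by omega) (by omega) (by omega)
      refine ⟨by omega, fun t ht => ?_⟩
      rcases Nat.lt_succ_iff_lt_or_eq.1 ht with ht | rfl
      · rw [h5 t ht]
        congr 1
        omega
      · rw [heq]
        congr 1
        omega

theorem fwd {H : A → List A} {hne : ∀ a, H a ≠ []} (hm : MarkedSubst H hne)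
    {x x' : ℕ → A} {i p n b b' : ℕ}
    (hx : ∀ s < n, substSeq H x (i + s) = substSeq H x' (p + s))
    (hb : i ≤ cut H x b) (hbb : cut H x b + p = cut H x' b' + i) (t : ℕ)
    (ht : ∀ t' < t, cut H x (b + t') < i + n) :
    cut H x (b + t) + p = cut H x' (b' + t) + i ∧ ∀ t' < t, x (b + t') = x' (b' + t') := by
  induction t with
  | zero => exact ⟨hbb, by simp⟩
  | succ t ih =>
    obtain ⟨h1, h2⟩ := ih fun t' h => ht t' (by omega)
    have h3 := ht t (by omega)
    have h4 : cut H x b ≤ cut H x (b + t) := cut_mono H x (by omega)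
    have heq : x (b + t) = x' (b' + t) := by
      apply mark_first hm
      have v1 := At.val hne (H := H) (x := x) ⟨b + t, rfl, rfl, List.length_pos_iff.2 (hne _)⟩
      have v2 := At.val hne (H := H) (x := x') ⟨b' + t, rfl, rfl, List.length_pos_iff.2 (hne _)⟩
      rw [v1, v2]
      congr 1
      have := hx (cut H x (b + t) - i) (by omega)
      have e1 : i + (cut H x (b + t) - i) = cut H x (b + t) + 0 := by omega
      have e2 : p + (cut H x (b + t) - i) = cut H x' (b' + t) + 0 := by omega
      rwa [e1, e2] at this
    refine ⟨?_, fun t' h => ?_⟩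
    · rw [← add_assoc, cut_succ, ← add_assoc, cut_succ, heq]
      omega
    · rcases Nat.lt_succ_iff_lt_or_eq.1 h with h | rfl
      · exact h2 t' h
      · exact heq

/-- recognizability, in the form used below -/
theorem scale [Fintype A] [DecidableEq A] (hD : 2 ≤ Fintype.card A) {H : A → List A}
    {hne : ∀ a, H a ≠ []} (hprim : PrimitiveSubst H) (haper : AperiodicSubst H)
    (hm : MarkedSubst H hne) {u : ℕ → A} (hu : substSeq H u = u) :
    ∃ l, ∀ (z : ℕ → A) (k n : ℕ), k < (H (z 0)).length → l ≤ n →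
      InL u (shift^[k] (substSeq H z)) n → ∃ j, InL u z j ∧ k + n ≤ cut H z j := by
  obtain ⟨l, hl⟩ := sync hD hprim haper hm hu
  refine ⟨l, fun z k n hk hn ⟨p, hp⟩ => ?_⟩
  simp only [shift_iter] at hp
  obtain ⟨s, hs, hs0, a, a', ⟨b, hb, -, -⟩, ⟨b', hb', -, -⟩⟩ := hl z k p n hn hp
  have hx : ∀ s < n, substSeq H z (k + s) = substSeq H u (p + s) := by rwa [hu]
  have hex : ∃ t, k + n ≤ cut H z (b + t) := ⟨k + n, by have := le_cut H hne z (b + (k + n)); omega⟩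
  classical
  have ht := Nat.find_spec hex
  have ht2 : ∀ t' < Nat.find hex, cut H z (b + t') < k + n := fun t' h =>
    not_le.1 (Nat.find_min hex h)
  set t := Nat.find hex
  obtain ⟨h1, h2⟩ := back hm hk hx b b' (by omega) (by omega) (by omega)
  obtain ⟨h3, h4⟩ := fwd hm hx (b := b) (b' := b') (by omega) (by omega) t ht2
  refine ⟨b + t, ⟨b' - b, fun w hw => ?_⟩, ht⟩
  by_cases hwb : w < b
  · exact h2 w hwb
  · have := h4 (w - b) (by omega)
    have e1 : b + (w - b) = w := by omega
    have e2 : b' + (w - b) = b' - b + w := by omega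
    rwa [e1, e2] at this

/-- all the iterated images of `z` consist of long words of the language -/
def Good (H : A → List A) (u : ℕ → A) (l : ℕ) (z : ℕ → A) : Prop :=
  ∀ i m, InL u (shift^[i] ((substSeq H)^[m] z)) l

theorem Good.next {H : A → List A} (hne : ∀ a, H a ≠ []) {u : ℕ → A} {l : ℕ} {z : ℕ → A}
    (h : Good H u l z) (i : ℕ) : Good H u l (shift^[i] (substSeq H z)) := fun j m => by
  rw [iter_shift' H hne, ← Function.iterate_succ_apply]
  exact h _ _

theorem scale_iter {H : A → List A} (hne : ∀ a, H a ≠ []) {u : ℕ → A} {l : ℕ}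
    (hl : ∀ (z : ℕ → A) (k n : ℕ), k < (H (z 0)).length → l ≤ n →
      InL u (shift^[k] (substSeq H z)) n → ∃ j, InL u z j ∧ k + n ≤ cut H z j) (m : ℕ) :
    ∀ (z : ℕ → A), Good H u l z → ∀ k n, k < P H m (z 0) → l ≤ n →
      InL u (shift^[k] ((substSeq H)^[m] z)) n → ∃ j, InL u z j ∧ k + n ≤ len H m z j := by
  induction m with
  | zero =>
    intro z hz k n hk hn h
    have : k = 0 := by simp only [P] at hk; omega
    subst this
    exact ⟨n, h, by simp [len_zero_eq]⟩
  | succ m ih =>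
    intro z hz k n hk hn h
    rw [← len_one, ← len_sub H hne, cut_one] at hk
    obtain ⟨i, k', rfl, hk'⟩ := len_block H hne m (substSeq H z) k
    have hi : i < (H (z 0)).length := block_lt _ hk
    rw [Function.iterate_succ_apply, ← iter_shift' H hne] at h
    obtain ⟨j', hj1, hj2⟩ := ih (shift^[i] (substSeq H z)) (hz.next hne i) k' n
      (by rwa [shift_iter, add_zero]) hn h
    obtain ⟨j2, h3, h4, h5⟩ : ∃ j2, l ≤ j2 ∧ j' ≤ j2 ∧ InL u (shift^[i] (substSeq H z)) j2 := by
      by_cases hc : l ≤ j'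
      · exact ⟨j', hc, le_rfl, hj1⟩
      · exact ⟨l, le_rfl, by omega, by simpa using hz i 1⟩
    obtain ⟨j, hj, hj3⟩ := hl z i j2 hi h3 h5
    refine ⟨j, hj, ?_⟩
    rw [← len_sub H hne]
    refine le_trans ?_ (len_mono H m _ hj3)
    rw [len_add]
    have := len_mono H m (shift^[i] (substSeq H z)) h4
    omega

theorem good_of_large {H : A → List A} (hne : ∀ a, H a ≠ []) {u : ℕ → A} (hu : substSeq H u = u)
    (h2 : TwoFull H u) {l N : ℕ} (hN : ∀ m ≥ N, ∀ a, l ≤ P H m a) (x : ℕ → A) (j : ℕ) :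
    Good H u l (shift^[j] ((substSeq H)^[N] x)) := fun i m => by
  rw [iter_shift' H hne, ← Function.iterate_add_apply]
  obtain ⟨b, r, hq, hr⟩ := len_block H hne (m + N) x (len H m ((substSeq H)^[N] x) j + i)
  rw [hq, ← iter_shift' H hne]
  have h3 : InL u (shift^[b] x) 2 := by
    rw [← inL_iff]
    exact h2 _ (by simp [prefixWord])
  have h4 := h3.iter H hne hu (m + N)
  rw [len_succ, len_one] at h4
  have h5 := hN (m + N) (by omega) (shift^[b] x 1)
  rw [shift_iter, add_zero] at h4
  exact InL.drop (h4.mono (by omega))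

end RL

namespace RL

theorem mem_K_iff [TopologicalSpace A] [DiscreteTopology A] (u z : ℕ → A) :
    z ∈ orbitClosure u ↔ ∀ n, InL u z n := by
  unfold orbitClosure
  rw [mem_closure_iff]
  constructor
  · intro h n
    obtain ⟨y, hy, p, rfl⟩ := h _ (PiNat.isOpen_cylinder (fun _ => A) z n)
      (PiNat.self_mem_cylinder z n)
    refine ⟨p, fun s hs => ?_⟩
    rw [← hy s hs, shift_iter]
  · intro h o ho hz
    obtain ⟨v, ⟨x, n, rfl⟩, hv, hvo⟩ :=
      (PiNat.isTopologicalBasis_cylinders (fun _ => A)).exists_subset_of_mem_open hz ho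
    obtain ⟨p, hp⟩ := h n
    refine ⟨shift^[p] u, hvo ?_, p, rfl⟩
    intro i hi
    rw [shift_iter, ← hp i hi]
    exact hv i hi

theorem orbit_mem_K [TopologicalSpace A] (u : ℕ → A) (p : ℕ) : shift^[p] u ∈ orbitClosure u :=
  subset_closure ⟨p, rfl⟩

theorem delta_spec [TopologicalSpace A] [DiscreteTopology A] {u z : ℕ → A}
    (hz : z ∉ orbitClosure u) : InL u z (delta u z) ∧ ∀ n, InL u z n → n ≤ delta u z := by
  rw [mem_K_iff] at hz
  push Not at hz
  obtain ⟨n0, hn0⟩ := hz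
  have e : {n | prefixWord z n ∈ Lang u} = {n | InL u z n} := by
    ext n; exact inL_iff u z n
  have hb : BddAbove {n | InL u z n} := ⟨n0, fun n hn => by
    by_contra hc
    exact hn0 (InL.mono hn (not_le.1 hc).le)⟩
  have hn : {n | InL u z n}.Nonempty := ⟨0, 0, by simp⟩
  unfold delta
  rw [e]
  exact ⟨Nat.sSup_mem hn hb, fun n hn => le_csSup hb hn⟩

theorem unif_cont [Finite A] [TopologicalSpace A] [DiscreteTopology A] {f : (ℕ → A) → ℝ}
    (hf : Continuous f) {ε : ℝ} (hε : 0 < ε) :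
    ∃ n, ∀ z z' : ℕ → A, (∀ i < n, z i = z' i) → |f z - f z'| < ε := by
  have h1 : ∀ z : ℕ → A, ∃ n, ∀ z' ∈ PiNat.cylinder z n, |f z' - f z| < ε / 2 := fun z => by
    have ho : IsOpen {z' | |f z' - f z| < ε / 2} :=
      isOpen_lt (by fun_prop) continuous_const
    obtain ⟨v, ⟨x, n, rfl⟩, hv, hvo⟩ :=
      (PiNat.isTopologicalBasis_cylinders (fun _ => A)).exists_subset_of_mem_open
        (show z ∈ {z' | |f z' - f z| < ε / 2} by simpa using hε) ho
    refine ⟨n, fun z' hz' => hvo ?_⟩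
    rwa [← PiNat.mem_cylinder_iff_eq.1 hv]
  choose n hn using h1
  obtain ⟨t, ht⟩ := isCompact_univ.elim_finite_subcover (fun z : ℕ → A => PiNat.cylinder z (n z))
    (fun z => PiNat.isOpen_cylinder (fun _ => A) z (n z))
    (fun z _ => Set.mem_iUnion.2 ⟨z, PiNat.self_mem_cylinder z _⟩)
  refine ⟨t.sup n, fun z z' hz => ?_⟩
  obtain ⟨w, hw⟩ := Set.mem_iUnion.1 (ht (Set.mem_univ z))
  obtain ⟨hwt, hw⟩ := Set.mem_iUnion.1 hw
  have hw' : z' ∈ PiNat.cylinder w (n w) := fun i hi => by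
    rw [← hz i (hi.trans_le (Finset.le_sup hwt))]
    exact hw i hi
  have a1 := hn w z hw
  have a2 := hn w z' hw'
  rw [abs_lt] at *
  constructor <;> linarith

theorem bounded [Finite A] [TopologicalSpace A] [DiscreteTopology A] {f : (ℕ → A) → ℝ}
    (hf : Continuous f) : ∃ B, 0 ≤ B ∧ ∀ z, |f z| ≤ B := by
  obtain ⟨B, hB⟩ := isCompact_univ.exists_bound_of_continuousOn hf.continuousOn
  exact ⟨max B 0, le_max_right _ _, fun z => le_max_of_le_left (hB z trivial)⟩

theorem continuous_shift [TopologicalSpace A] : Continuous (shift : (ℕ → A) → (ℕ → A)) :=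
  continuous_pi fun n => continuous_apply (n + 1)

section erg

variable [Fintype A] [TopologicalSpace A] [DiscreteTopology A] [MeasurableSpace A] [BorelSpace A]

/-- empirical measure -/
noncomputable def emp (z : ℕ → A) (n : ℕ) : Measure (ℕ → A) :=
  ((n : ENNReal) + 1)⁻¹ • ∑ i ∈ Finset.range (n + 1), Measure.dirac (shift^[i] z)

theorem emp_prob (z : ℕ → A) (n : ℕ) : IsProbabilityMeasure (emp z n) := by
  constructor
  simp only [emp, Measure.smul_apply, Measure.finsetSum_apply, measure_univ, Finset.sum_const,
    Finset.card_range, smul_eq_mul, nsmul_eq_mul, mul_one]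
  push_cast
  exact ENNReal.inv_mul_cancel (by simp) (by finiteness)

theorem emp_int (z : ℕ → A) (n : ℕ) {f : (ℕ → A) → ℝ} (hf : Continuous f) :
    ∫ y, f y ∂(emp z n) = ((n : ℝ) + 1)⁻¹ * ∑ i ∈ Finset.range (n + 1), f (shift^[i] z) := by
  obtain ⟨B, -, hB⟩ := bounded hf
  rw [emp, integral_smul_measure, integral_finsetSum_measure]
  · simp only [integral_dirac, smul_eq_mul, ENNReal.toReal_inv]
    congr 2
  · intro i _
    exact (integrable_const B).mono' hf.aestronglyMeasurable (ae_of_all _ hB)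

theorem unif_erg (u : ℕ → A) (μ : Measure (ℕ → A))
    (huniq : ∀ ν : Measure (ℕ → A), IsProbabilityMeasure ν →
      Measure.map shift ν = ν → ν (orbitClosure u)ᶜ = 0 → ν = μ)
    {G : (ℕ → A) → ℝ} (hG : Continuous G) {ε : ℝ} (hε : 0 < ε) :
    ∃ N, ∀ n ≥ N, ∀ p, |∫ y, G y ∂(emp (shift^[p] u) n) - ∫ y, G y ∂μ| ≤ ε := by
  by_contra hc
  push Not at hc
  choose n hn p hp using hc
  let ν : ℕ → ProbabilityMeasure (ℕ → A) := fun N => ⟨emp (shift^[p N] u) (n N), emp_prob _ _⟩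
  let F : Ultrafilter ℕ := Ultrafilter.of atTop
  have hF : (F : Filter ℕ) ≤ atTop := Ultrafilter.of_le _
  obtain ⟨νl, hlim⟩ : ∃ νl, Tendsto ν F (𝓝 νl) := ⟨(F.map ν).lim, (F.map ν).le_nhds_lim⟩
  have hlim' := ProbabilityMeasure.tendsto_iff_forall_integral_tendsto.1 hlim
  have hn' : Tendsto (fun N => ((n N : ℝ) + 1)) F atTop := by
    refine Tendsto.mono_left ?_ hF
    refine tendsto_atTop_add_const_right _ _ (tendsto_natCast_atTop_atTop.comp ?_)
    exact tendsto_atTop_mono hn tendsto_id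
  have hcontShift := continuous_shift (A := A)
  have hinv : Measure.map shift (νl : Measure (ℕ → A)) = νl := by
    have := Measure.isProbabilityMeasure_map (μ := (νl : Measure (ℕ → A)))
      hcontShift.measurable.aemeasurable
    apply ext_of_forall_integral_eq_of_IsFiniteMeasure
    intro f
    rw [integral_map hcontShift.measurable.aemeasurable f.continuous.aestronglyMeasurable]
    have h1 := hlim' f
    have h2 := hlim' (f.compContinuous ⟨shift, hcontShift⟩)
    obtain ⟨B, hB0, hB⟩ := bounded f.continuous
    have h3 : Tendsto (fun N => ∫ y, f (shift y) ∂(ν N : Measure (ℕ → A))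
        - ∫ y, f y ∂(ν N : Measure (ℕ → A))) F (𝓝 0) := by
      have hz : Tendsto (fun N => ((n N : ℝ) + 1)⁻¹ * (2 * B)) F (𝓝 0) := by
        have := (tendsto_inv_atTop_zero.comp hn').mul_const (2 * B)
        simpa using this
      refine squeeze_zero_norm (fun N => ?_) hz
      change ‖∫ y, f (shift y) ∂(emp (shift^[p N] u) (n N))
        - ∫ y, f y ∂(emp (shift^[p N] u) (n N))‖ ≤ _
      rw [emp_int _ _ (f := fun y => f (shift y)) (f.continuous.comp hcontShift), emp_int _ _ f.continuous, ← mul_sub, norm_mul,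
        ← Finset.sum_sub_distrib]
      have e : ∀ i, f (shift (shift^[i] (shift^[p N] u))) = f (shift^[i + 1] (shift^[p N] u)) :=
        fun i => by rw [Function.iterate_succ_apply']
      simp only [e]
      rw [Finset.sum_range_sub (fun i => f (shift^[i] (shift^[p N] u)))]
      have hpos : (0 : ℝ) ≤ ((n N : ℝ) + 1)⁻¹ := by positivity
      rw [Real.norm_of_nonneg hpos]
      refine mul_le_mul_of_nonneg_left ?_ hpos
      rw [Real.norm_eq_abs]
      have b1 := hB (shift^[n N + 1] (shift^[p N] u))
      have b2 := hB (shift^[0] (shift^[p N] u))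
      rw [abs_le] at *
      constructor <;> linarith
    have h4 := tendsto_nhds_unique h3 (h2.sub h1)
    have h5 : ∫ y, f (shift y) ∂(νl : Measure (ℕ → A)) - ∫ y, f y ∂(νl : Measure (ℕ → A)) = 0 :=
      h4.symm
    linarith
  have hsup : (νl : Measure (ℕ → A)) (orbitClosure u)ᶜ = 0 := by
    have ho : IsOpen (orbitClosure u)ᶜ := isClosed_closure.isOpen_compl
    have h1 := ProbabilityMeasure.le_liminf_measure_open_of_tendsto hlim ho
    have h2 : ∀ N, (ν N : Measure (ℕ → A)) (orbitClosure u)ᶜ = 0 := fun N => by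
      change emp (shift^[p N] u) (n N) _ = 0
      simp only [emp, Measure.smul_apply, Measure.finsetSum_apply, smul_eq_mul]
      rw [Finset.sum_eq_zero, mul_zero]
      intro i _
      rw [Measure.dirac_apply' _ ho.measurableSet, shift_add]
      simp [orbit_mem_K]
    simp only [h2] at h1
    simpa using h1
  have heq := huniq νl inferInstance hinv hsup
  obtain ⟨B, hB0, hB⟩ := bounded hG
  have h6 : Tendsto (fun N => ∫ y, G y ∂(ν N : Measure (ℕ → A))) F
      (𝓝 (∫ y, G y ∂(νl : Measure (ℕ → A)))) :=
    hlim' (BoundedContinuousFunction.mkOfBound ⟨G, hG⟩ (2 * B) fun x y => by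
      rw [Real.dist_eq]
      have b1 := hB x
      have b2 := hB y
      simp only [ContinuousMap.coe_mk]
      rw [abs_le] at *
      constructor <;> linarith)
  rw [heq] at h6
  have h7 := (h6.sub_const (∫ y, G y ∂μ)).abs
  simp only [sub_self, abs_zero] at h7
  obtain ⟨N, hN⟩ := (h7.eventually (gt_mem_nhds hε)).exists
  exact absurd hN (not_lt.2 (hp N).le)

theorem birkhoff_orbit (u : ℕ → A) (μ : Measure (ℕ → A))
    (huniq : ∀ ν : Measure (ℕ → A), IsProbabilityMeasure ν →
      Measure.map shift ν = ν → ν (orbitClosure u)ᶜ = 0 → ν = μ)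
    {G : (ℕ → A) → ℝ} (hG : Continuous G) {ε : ℝ} (hε : 0 < ε) :
    ∃ C, 0 ≤ C ∧ ∀ p n : ℕ, |∑ i ∈ Finset.range n, (G (shift^[i] (shift^[p] u)) - ∫ y, G y ∂μ)|
      ≤ ε * n + C := by
  obtain ⟨N, hN⟩ := unif_erg u μ huniq hG hε
  obtain ⟨B, hB0, hB⟩ := bounded hG
  set c := ∫ y, G y ∂μ with hc
  refine ⟨(N + 1) * (B + |c|), by positivity, fun p n => ?_⟩
  by_cases hn : n ≤ N
  · have h1 : |∑ i ∈ Finset.range n, (G (shift^[i] (shift^[p] u)) - c)| ≤ n * (B + |c|) := by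
      refine (Finset.abs_sum_le_sum_abs _ _).trans ?_
      have := Finset.sum_le_card_nsmul (Finset.range n)
        (fun i => |G (shift^[i] (shift^[p] u)) - c|) (B + |c|)
        (fun i _ => (abs_sub _ _).trans (add_le_add (hB _) le_rfl))
      simpa [mul_add] using this
    have h2 : (n : ℝ) ≤ N + 1 := by
      have : (n : ℝ) ≤ N := by exact_mod_cast hn
      linarith
    have h3 : (n : ℝ) * (B + |c|) ≤ (N + 1) * (B + |c|) :=
      mul_le_mul_of_nonneg_right h2 (by positivity)
    have : 0 ≤ ε * n := by positivity
    linarith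
  · obtain ⟨k, rfl⟩ : ∃ k, n = k + 1 := ⟨n - 1, by omega⟩
    have h1 := hN k (by omega) p
    rw [emp_int _ _ hG] at h1
    have hk : (0 : ℝ) < (k : ℝ) + 1 := by positivity
    have h2 : ∑ i ∈ Finset.range (k + 1), (G (shift^[i] (shift^[p] u)) - c)
        = ((k : ℝ) + 1) * (((k : ℝ) + 1)⁻¹ * ∑ i ∈ Finset.range (k + 1), G (shift^[i] (shift^[p] u))
          - c) := by
      rw [Finset.sum_sub_distrib]
      simp only [Finset.sum_const, Finset.card_range, nsmul_eq_mul]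
      push_cast
      field_simp
    rw [h2, abs_mul, abs_of_pos hk]
    push_cast
    have h3 := mul_le_mul_of_nonneg_left h1 hk.le
    have : 0 ≤ ((N : ℝ) + 1) * (B + |c|) := by positivity
    linarith

theorem birkhoff (u : ℕ → A) (μ : Measure (ℕ → A))
    (huniq : ∀ ν : Measure (ℕ → A), IsProbabilityMeasure ν →
      Measure.map shift ν = ν → ν (orbitClosure u)ᶜ = 0 → ν = μ)
    {G : (ℕ → A) → ℝ} (hG : Continuous G) {ε : ℝ} (hε : 0 < ε) :
    ∃ C, 0 ≤ C ∧ ∀ z n, InL u z n →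
      |∑ i ∈ Finset.range n, (G (shift^[i] z) - ∫ y, G y ∂μ)| ≤ ε * n + C := by
  obtain ⟨C, hC0, hC⟩ := birkhoff_orbit u μ huniq hG (half_pos hε)
  obtain ⟨B, hB0, hB⟩ := bounded hG
  obtain ⟨r, hr⟩ := unif_cont hG (half_pos hε)
  set c := ∫ y, G y ∂μ with hc
  refine ⟨C + r * (2 * B), by positivity, fun z n ⟨p, hp⟩ => ?_⟩
  have h1 := hC p n
  have h2 : |∑ i ∈ Finset.range n, (G (shift^[i] z) - G (shift^[i] (shift^[p] u)))|
      ≤ ε / 2 * n + r * (2 * B) := by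
    refine (Finset.abs_sum_le_sum_abs _ _).trans ?_
    have h3 : ∀ i ∈ Finset.range n, |G (shift^[i] z) - G (shift^[i] (shift^[p] u))|
        ≤ ε / 2 + if n - r ≤ i then 2 * B else 0 := fun i hi => by
      rw [Finset.mem_range] at hi
      split_ifs with hir
      · have b1 := hB (shift^[i] z)
        have b2 := hB (shift^[i] (shift^[p] u))
        rw [abs_le] at *
        constructor <;> linarith
      · rw [add_zero]
        refine (hr _ _ fun t ht => ?_).le
        rw [shift_iter, shift_iter, shift_iter, hp _ (by omega)]
    refine (Finset.sum_le_sum h3).trans ?_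
    rw [Finset.sum_add_distrib, ← Finset.sum_filter]
    simp only [Finset.sum_const, Finset.card_range, nsmul_eq_mul]
    have h4 : (Finset.filter (fun i => n - r ≤ i) (Finset.range n)).card ≤ r := by
      have : Finset.filter (fun i => n - r ≤ i) (Finset.range n) ⊆ Finset.Ico (n - r) n := by
        intro i hi
        simp only [Finset.mem_filter, Finset.mem_range, Finset.mem_Ico] at hi ⊢
        omega
      have := Finset.card_le_card this
      rw [Nat.card_Ico] at this
      omega
    have h5 : ((Finset.filter (fun i => n - r ≤ i) (Finset.range n)).card : ℝ) * (2 * B)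
        ≤ r * (2 * B) := mul_le_mul_of_nonneg_right (by exact_mod_cast h4) (by positivity)
    linarith
  have h6 : ∑ i ∈ Finset.range n, (G (shift^[i] z) - c)
      = ∑ i ∈ Finset.range n, (G (shift^[i] z) - G (shift^[i] (shift^[p] u)))
        + ∑ i ∈ Finset.range n, (G (shift^[i] (shift^[p] u)) - c) := by
    rw [← Finset.sum_add_distrib]
    exact Finset.sum_congr rfl fun i _ => by ring
  rw [h6]
  refine (abs_add_le _ _).trans ?_
  linarith

end erg

end RL

namespace RL

section analytic

theorem sum_inv_eq (L p : ℕ) (h : p ≤ L) :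
    ∑ k ∈ Finset.range p, ((L : ℝ) - k)⁻¹ = (harmonic L : ℝ) - (harmonic (L - p) : ℝ) := by
  induction p with
  | zero => simp
  | succ p ih =>
    rw [Finset.sum_range_succ, ih (by omega)]
    obtain ⟨d, rfl⟩ : ∃ d, L = p + 1 + d := ⟨L - (p + 1), by omega⟩
    have e1 : p + 1 + d - p = d + 1 := by omega
    have e2 : p + 1 + d - (p + 1) = d := by omega
    rw [e1, e2, harmonic_succ]
    push_cast
    have e3 : (p : ℝ) + 1 + d - p = d + 1 := by ring
    rw [e3]
    ring

theorem abel_bound (a w : ℕ → ℝ) (M : ℝ) (n : ℕ) (hw0 : ∀ k ≤ n, 0 ≤ w k)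
    (hw : ∀ k < n, w k ≤ w (k + 1))
    (hM : ∀ k ≤ n, |∑ i ∈ Finset.range k, a i| ≤ M) :
    |∑ k ∈ Finset.range n, a k * w k| ≤ 2 * M * w n := by
  have h1 : ∀ n, ∑ k ∈ Finset.range n, a k * w k = (∑ i ∈ Finset.range n, a i) * w n
      - ∑ k ∈ Finset.range n, (∑ i ∈ Finset.range (k + 1), a i) * (w (k + 1) - w k) := by
    intro n
    induction n with
    | zero => simp
    | succ n ih =>
      rw [Finset.sum_range_succ, ih, Finset.sum_range_succ (fun k => (∑ i ∈ Finset.range (k + 1), a i)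
        * (w (k + 1) - w k)), Finset.sum_range_succ a]
      ring
  have hM0 : 0 ≤ M := (abs_nonneg _).trans (hM 0 (Nat.zero_le _))
  have h2 : |∑ k ∈ Finset.range n, (∑ i ∈ Finset.range (k + 1), a i) * (w (k + 1) - w k)|
      ≤ M * w n := by
    refine (Finset.abs_sum_le_sum_abs _ _).trans ?_
    calc ∑ k ∈ Finset.range n, |(∑ i ∈ Finset.range (k + 1), a i) * (w (k + 1) - w k)|
        ≤ ∑ k ∈ Finset.range n, M * (w (k + 1) - w k) := by
          refine Finset.sum_le_sum fun k hk => ?_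
          rw [Finset.mem_range] at hk
          have := hw k hk
          rw [abs_mul, abs_of_nonneg (by linarith : 0 ≤ w (k + 1) - w k)]
          exact mul_le_mul_of_nonneg_right (hM _ hk) (by linarith)
      _ = M * (w n - w 0) := by rw [← Finset.mul_sum, Finset.sum_range_sub]
      _ ≤ M * w n := mul_le_mul_of_nonneg_left (by linarith [hw0 0 (Nat.zero_le _)]) hM0
  have h3 : |(∑ i ∈ Finset.range n, a i) * w n| ≤ M * w n := by
    rw [abs_mul, abs_of_nonneg (hw0 n le_rfl)]
    exact mul_le_mul_of_nonneg_right (hM n le_rfl) (hw0 n le_rfl)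
  rw [h1 n]
  refine (abs_sub _ _).trans ?_
  linarith

variable {p L : ℕ → ℕ} {ρ : ℝ}

theorem D_atTop (hp : Tendsto p atTop atTop) (h0 : ∀ m, 0 < p m)
    (hρ : Tendsto (fun m => (L m : ℝ) / p m) atTop (𝓝 ρ)) (h1 : 1 < ρ) :
    Tendsto (fun m => (L m : ℝ) - p m) atTop atTop := by
  have h2 : Tendsto (fun m => (p m : ℝ)) atTop atTop := tendsto_natCast_atTop_atTop.comp hp
  have h3 := h2.atTop_mul_pos (by linarith : 0 < ρ - 1) (hρ.sub_const 1)
  refine h3.congr fun m => ?_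
  have : (p m : ℝ) ≠ 0 := by exact_mod_cast (h0 m).ne'
  field_simp

theorem p_div_D (h0 : ∀ m, 0 < p m)
    (hρ : Tendsto (fun m => (L m : ℝ) / p m) atTop (𝓝 ρ)) (h1 : 1 < ρ) :
    Tendsto (fun m => (p m : ℝ) / ((L m : ℝ) - p m)) atTop (𝓝 (ρ - 1)⁻¹) := by
  have h3 := (hρ.sub_const 1).inv₀ (by linarith : ρ - 1 ≠ 0)
  refine h3.congr fun m => ?_
  have : (p m : ℝ) ≠ 0 := by exact_mod_cast (h0 m).ne'
  rw [← inv_div]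
  congr 1
  field_simp

theorem log_lim (hpL : ∀ m, p m < L m) (hp : Tendsto p atTop atTop) (h0 : ∀ m, 0 < p m)
    (hρ : Tendsto (fun m => (L m : ℝ) / p m) atTop (𝓝 ρ)) (h1 : 1 < ρ) :
    Tendsto (fun m => ∑ k ∈ Finset.range (p m), ((L m : ℝ) - k)⁻¹) atTop
      (𝓝 (Real.log (ρ / (ρ - 1)))) := by
  have hD := D_atTop hp h0 hρ h1
  have hDn : Tendsto (fun m => L m - p m) atTop atTop := by
    rw [← tendsto_natCast_atTop_iff (R := ℝ)]
    refine hD.congr fun m => ?_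
    rw [Nat.cast_sub (hpL m).le]
  have hLn : Tendsto L atTop atTop := tendsto_atTop_mono (fun m => (hpL m).le) hp
  have a1 := Real.tendsto_harmonic_sub_log.comp hLn
  have a2 := Real.tendsto_harmonic_sub_log.comp hDn
  have a3 : Tendsto (fun m => Real.log (((L m : ℝ) / p m) / ((L m : ℝ) / p m - 1))) atTop
      (𝓝 (Real.log (ρ / (ρ - 1)))) := by
    refine Tendsto.log (hρ.div (hρ.sub_const 1) (by linarith)) ?_
    exact (div_pos (by linarith) (by linarith)).ne'
  have a4 := (a1.sub a2).add a3
  rw [sub_self, zero_add] at a4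
  refine a4.congr fun m => ?_
  rw [sum_inv_eq _ _ (hpL m).le]
  have hp0 : (0 : ℝ) < p m := by exact_mod_cast h0 m
  have hpL' : (p m : ℝ) < L m := by exact_mod_cast hpL m
  have e : ((L m : ℝ) / p m) / ((L m : ℝ) / p m - 1) = L m / ((L m : ℝ) - p m) := by
    have : (L m : ℝ) - p m ≠ 0 := by linarith
    have : (L m : ℝ) / p m - 1 ≠ 0 := by
      rw [ne_eq, sub_eq_zero, div_eq_one_iff_eq hp0.ne']
      linarith
    field_simp
  rw [e, Real.log_div (by linarith) (by linarith)]
  simp only [Function.comp_apply]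
  rw [Nat.cast_sub (hpL m).le]
  ring

theorem abel_lim (hpL : ∀ m, p m < L m) (hp : Tendsto p atTop atTop) (h0 : ∀ m, 0 < p m)
    (hρ : Tendsto (fun m => (L m : ℝ) / p m) atTop (𝓝 ρ)) (h1 : 1 < ρ) (a : ℕ → ℕ → ℝ)
    (ha : ∀ ε > 0, ∃ C, 0 ≤ C ∧ ∀ m, ∀ n ≤ p m, |∑ i ∈ Finset.range n, a m i| ≤ ε * n + C) :
    Tendsto (fun m => ∑ k ∈ Finset.range (p m), a m k * ((L m : ℝ) - k)⁻¹) atTop (𝓝 0) := by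
  have hD := D_atTop hp h0 hρ h1
  have hq := p_div_D h0 hρ h1
  set κ := (ρ - 1)⁻¹ with hκ
  have hκ0 : 0 < κ := inv_pos.2 (by linarith)
  rw [Metric.tendsto_nhds]
  intro η hη
  obtain ⟨C, hC0, hC⟩ := ha (η / (4 * (κ + 1))) (by positivity)
  have e1 : ∀ᶠ m in atTop, (p m : ℝ) / ((L m : ℝ) - p m) < κ + 1 :=
    hq.eventually (gt_mem_nhds (by linarith))
  have e2 : ∀ᶠ m in atTop, 2 * C * ((L m : ℝ) - p m)⁻¹ < η / 2 := by
    have := (tendsto_inv_atTop_zero.comp hD).const_mul (2 * C)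
    rw [mul_zero] at this
    exact this.eventually (gt_mem_nhds (half_pos hη))
  filter_upwards [e1, e2] with m h3 h4
  rw [Real.dist_eq, sub_zero]
  have hpL' : (p m : ℝ) < L m := by exact_mod_cast hpL m
  have key := abel_bound (a m) (fun k => ((L m : ℝ) - k)⁻¹) (η / (4 * (κ + 1)) * p m + C) (p m)
    (fun k hk => by
      have : (k : ℝ) ≤ p m := by exact_mod_cast hk
      exact inv_nonneg.2 (by linarith))
    (fun k hk => by
      have : (k : ℝ) + 1 ≤ p m := by exact_mod_cast hk
      push_cast
      apply inv_anti₀ <;> linarith)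
    (fun k hk => by
      refine (hC m k hk).trans ?_
      have : (k : ℝ) ≤ p m := by exact_mod_cast hk
      gcongr)
  refine key.trans_lt ?_
  have h5 : η / (4 * (κ + 1)) * ((p m : ℝ) / ((L m : ℝ) - p m)) ≤ η / (4 * (κ + 1)) * (κ + 1) :=
    mul_le_mul_of_nonneg_left h3.le (by positivity)
  have h6 : η / (4 * (κ + 1)) * (κ + 1) = η / 4 := by field_simp
  have h7 : 2 * (η / (4 * (κ + 1)) * p m + C) * ((L m : ℝ) - p m)⁻¹
      = 2 * (η / (4 * (κ + 1)) * ((p m : ℝ) / ((L m : ℝ) - p m)))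
        + 2 * C * ((L m : ℝ) - p m)⁻¹ := by
    rw [div_eq_mul_inv (p m : ℝ)]
    ring
  rw [h7]
  linarith

theorem small_lim (hpL : ∀ m, p m < L m) (hp : Tendsto p atTop atTop) (h0 : ∀ m, 0 < p m)
    (hρ : Tendsto (fun m => (L m : ℝ) / p m) atTop (𝓝 ρ)) (h1 : 1 < ρ) {α : ℝ} (hα : 1 < α)
    (a : ℕ → ℕ → ℝ) (B : ℝ) (hB : 0 ≤ B) (ha : ∀ m k, |a m k| ≤ B) :
    Tendsto (fun m => ∑ k ∈ Finset.range (p m), a m k / ((L m : ℝ) - k) ^ α) atTop (𝓝 0) := by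
  have hD := D_atTop hp h0 hρ h1
  have hq := p_div_D h0 hρ h1
  have hr : Tendsto (fun m => ((L m : ℝ) - p m) ^ (-(α - 1))) atTop (𝓝 0) :=
    (tendsto_rpow_neg_atTop (by linarith : 0 < α - 1)).comp hD
  have hlim := (hq.mul hr).const_mul B
  rw [mul_zero, mul_zero] at hlim
  refine squeeze_zero_norm (fun m => ?_) hlim
  have hpL' : (p m : ℝ) < L m := by exact_mod_cast hpL m
  have hD0 : 0 < (L m : ℝ) - p m := by linarith
  rw [Real.norm_eq_abs]
  refine (Finset.abs_sum_le_sum_abs _ _).trans ?_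
  have h2 : ∀ k ∈ Finset.range (p m), |a m k / ((L m : ℝ) - k) ^ α|
      ≤ B / ((L m : ℝ) - p m) ^ α := fun k hk => by
    have hk' : (k : ℝ) ≤ p m := by exact_mod_cast (Finset.mem_range.1 hk).le
    have : ((L m : ℝ) - p m) ^ α ≤ ((L m : ℝ) - k) ^ α :=
      Real.rpow_le_rpow hD0.le (by linarith) (by linarith)
    have h3 : 0 < ((L m : ℝ) - p m) ^ α := Real.rpow_pos_of_pos hD0 _
    rw [abs_div, abs_of_pos (h3.trans_le this)]
    exact div_le_div₀ hB (ha m k) h3 this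
  refine (Finset.sum_le_card_nsmul _ _ _ h2).trans (le_of_eq ?_)
  rw [Finset.card_range, nsmul_eq_mul]
  have : ((L m : ℝ) - p m) ^ α = ((L m : ℝ) - p m) ^ (α - 1) * ((L m : ℝ) - p m) := by
    rw [← Real.rpow_add_one hD0.ne']
    congr 1
    ring
  rw [this, Real.rpow_neg hD0.le]
  have := (Real.rpow_pos_of_pos hD0 (α - 1)).ne'
  field_simp

theorem large_lim (hpL : ∀ m, p m < L m) (hp : Tendsto p atTop atTop) (h0 : ∀ m, 0 < p m)
    (hρ : Tendsto (fun m => (L m : ℝ) / p m) atTop (𝓝 ρ)) (h1 : 1 < ρ) {α : ℝ} (hα : α < 1)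
    (hα0 : 0 < α)
    (a : ℕ → ℕ → ℝ) (c : ℝ) (hc : 0 < c) (ha : ∀ᶠ m in atTop, ∀ k < p m, c ≤ a m k) :
    Tendsto (fun m => ∑ k ∈ Finset.range (p m), a m k / ((L m : ℝ) - k) ^ α) atTop atTop := by
  have hL : Tendsto (fun m => (L m : ℝ)) atTop atTop :=
    tendsto_natCast_atTop_atTop.comp (tendsto_atTop_mono (fun m => (hpL m).le) hp)
  have hr : Tendsto (fun m => (L m : ℝ) ^ (1 - α)) atTop atTop :=
    (tendsto_rpow_atTop (by linarith : 0 < 1 - α)).comp hL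
  have hq := (hρ.inv₀ (by linarith : ρ ≠ 0)).const_mul c
  have hlim := hr.atTop_mul_pos (by have := inv_pos.2 (by linarith : 0 < ρ); positivity) hq
  refine tendsto_atTop_mono' _ ?_ hlim
  filter_upwards [ha] with m hm
  have hp0 : (0 : ℝ) < p m := by exact_mod_cast h0 m
  have hpL' : (p m : ℝ) < L m := by exact_mod_cast hpL m
  have hL0 : (0 : ℝ) < L m := by linarith
  have h2 : ∀ k ∈ Finset.range (p m), c / (L m : ℝ) ^ α ≤ a m k / ((L m : ℝ) - k) ^ α := fun k hk => by
    have hk' : (k : ℝ) ≤ p m := by exact_mod_cast (Finset.mem_range.1 hk).le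
    have hk0 : (0 : ℝ) ≤ k := Nat.cast_nonneg k
    have h3 : 0 < ((L m : ℝ) - k) ^ α := Real.rpow_pos_of_pos (by linarith) _
    have h4 : ((L m : ℝ) - k) ^ α ≤ (L m : ℝ) ^ α :=
      Real.rpow_le_rpow (by linarith) (by linarith) (by linarith)
    have h5 := hm k (Finset.mem_range.1 hk)
    exact div_le_div₀ (hc.le.trans h5) h5 h3 h4
  refine le_trans (le_of_eq ?_) (Finset.card_nsmul_le_sum _ _ _ h2)
  rw [Finset.card_range, nsmul_eq_mul, Real.rpow_sub hL0, Real.rpow_one]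
  have := (Real.rpow_pos_of_pos hL0 α).ne'
  field_simp

end analytic

section perron

variable [Fintype A] [DecidableEq A] [TopologicalSpace A] [DiscreteTopology A]
  [MeasurableSpace A] [BorelSpace A]

theorem P_compare {H : A → List A} (hne : ∀ a, H a ≠ []) (hprim : PrimitiveSubst H) :
    ∃ C : ℕ, ∀ k a b, P H k b ≤ P H k a * C := by
  obtain ⟨K, -, hK⟩ := hprim
  obtain ⟨M, hM⟩ := P_bound H K
  refine ⟨M, fun k a b => (P_prim_ge H hne hK k a b).trans ?_⟩
  have := P_add H hne K k (fun _ => a)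
  rw [add_comm, this]
  exact len_le H hM _ _

theorem inL_one {H : A → List A} {u : ℕ → A} (h2 : TwoFull H u) (z : ℕ → A) : InL u z 2 := by
  rw [← inL_iff]
  exact h2 _ (by simp [prefixWord])

theorem P_approx (hD : 2 ≤ Fintype.card A) {H : A → List A}
    (hne : ∀ a, H a ≠ []) (hprim : PrimitiveSubst H) {u : ℕ → A} (hu : substSeq H u = u)
    (h2 : TwoFull H u) (μ : Measure (ℕ → A)) [IsProbabilityMeasure μ]
    (huniq : ∀ ν : Measure (ℕ → A), IsProbabilityMeasure ν →
      Measure.map shift ν = ν → ν (orbitClosure u)ᶜ = 0 → ν = μ) :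
    ∃ s : ℕ → ℝ, (∀ k, 0 < s k) ∧ ∀ η > 0, ∃ M, ∀ m ≥ M, ∀ k a,
      |(P H (k + m) a : ℝ) / (P H m a * s k) - 1| ≤ η := by
  let I : A → (ℕ → A) → ℝ := fun b z => if z 0 = b then 1 else 0
  have hI : ∀ b, Continuous (I b) := fun b =>
    (continuous_of_discreteTopology (f := fun a : A => if a = b then (1 : ℝ) else 0)).comp
      (continuous_apply 0)
  let f : A → ℝ := fun b => ∫ z, I b z ∂μ
  have hf0 : ∀ b, 0 ≤ f b := fun b => integral_nonneg fun z => by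
    simp only [I]; split_ifs <;> simp
  have hint : ∀ b, Integrable (I b) μ := fun b => by
    obtain ⟨B, -, hB⟩ := bounded (hI b)
    exact (integrable_const B).mono' (hI b).aestronglyMeasurable (ae_of_all _ hB)
  have hf1 : ∑ b, f b = 1 := by
    simp only [f]
    rw [← integral_finset_sum _ (fun b _ => hint b)]
    simp [I]
  let s : ℕ → ℝ := fun k => ∑ b, f b * P H k b
  obtain ⟨C, hC⟩ := P_compare hne hprim
  have hPs : ∀ k b, (P H k b : ℝ) ≤ C * s k := fun k b => by
    calc (P H k b : ℝ) = ∑ c, f c * P H k b := by rw [← Finset.sum_mul, hf1, one_mul]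
      _ ≤ ∑ c, f c * (P H k c * C) := Finset.sum_le_sum fun c _ =>
          mul_le_mul_of_nonneg_left (by exact_mod_cast hC k c b) (hf0 c)
      _ = C * s k := by
          simp only [s]
          rw [Finset.mul_sum]
          exact Finset.sum_congr rfl fun c _ => by ring
  have hs0 : ∀ k, 0 < s k := fun k => by
    have h1 : (0 : ℝ) < P H k (u 0) := by exact_mod_cast P_pos H hne k (u 0)
    have h3 := hPs k (u 0)
    have hC0 : (0 : ℝ) ≤ C := Nat.cast_nonneg C
    by_contra hc
    have : C * s k ≤ 0 := mul_nonpos_of_nonneg_of_nonpos hC0 (not_lt.1 hc)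
    linarith
  refine ⟨s, hs0, fun η hη => ?_⟩
  set ε := η / (2 * (Fintype.card A * C + 1)) with hε
  have hε0 : 0 < ε := by positivity
  choose E hE0 hE using fun b => birkhoff u μ huniq (hI b) hε0
  obtain ⟨n1, hn1⟩ := exists_nat_ge ((∑ b, E b) / ε)
  obtain ⟨M, hM⟩ := P_growth hD H hne hprim n1
  refine ⟨M, fun m hm k a => ?_⟩
  have hPm : (0 : ℝ) < P H m a := by exact_mod_cast P_pos H hne m a
  have hEb : ∀ b, E b ≤ ε * P H m a := fun b => by
    have h3 : E b ≤ ∑ b, E b := Finset.single_le_sum (fun b _ => hE0 b) (Finset.mem_univ b)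
    have h4 : (n1 : ℝ) ≤ P H m a := by exact_mod_cast hM m hm a
    have h5 := hn1.trans h4
    rw [div_le_iff₀ hε0] at h5
    linarith
  let z : ℕ → A := fun _ => a
  have hz : InL u ((substSeq H)^[m] z) (P H m a) := by
    have := ((inL_one h2 z).mono one_le_two).iter H hne hu m
    rwa [len_one] at this
  have e1 : (P H (k + m) a : ℝ) - P H m a * s k
      = ∑ b, (∑ i ∈ Finset.range (P H m a), (I b (shift^[i] ((substSeq H)^[m] z)) - f b)) * P H k b := by
    have h3 : P H (k + m) a = len H k ((substSeq H)^[m] z) (P H m a) := P_add H hne k m z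
    rw [h3]
    simp only [len, s, Finset.sum_sub_distrib, sub_mul, Finset.sum_const, Finset.card_range,
      nsmul_eq_mul]
    congr 1
    · simp only [Finset.sum_mul]
      rw [Finset.sum_comm]
      push_cast
      refine Finset.sum_congr rfl fun i _ => ?_
      simp [I, shift_iter]
    · rw [Finset.mul_sum]
      exact Finset.sum_congr rfl fun b _ => by ring
  have e2 : |(P H (k + m) a : ℝ) - P H m a * s k| ≤ η * (P H m a * s k) := by
    rw [e1]
    refine (Finset.abs_sum_le_sum_abs _ _).trans ?_
    have h3 : ∀ b ∈ Finset.univ, |(∑ i ∈ Finset.range (P H m a),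
        (I b (shift^[i] ((substSeq H)^[m] z)) - f b)) * (P H k b : ℝ)|
        ≤ 2 * ε * P H m a * (C * s k) := fun b _ => by
      rw [abs_mul, abs_of_nonneg (Nat.cast_nonneg (P H k b) : (0 : ℝ) ≤ P H k b)]
      refine mul_le_mul ?_ (hPs k b) (Nat.cast_nonneg _) (by positivity)
      refine (hE b _ _ hz).trans ?_
      linarith [hEb b]
    refine (Finset.sum_le_card_nsmul _ _ _ h3).trans ?_
    rw [nsmul_eq_mul, Finset.card_univ]
    have h4 : 2 * ε * (Fintype.card A * C) ≤ η := by
      rw [hε]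
      have : (0 : ℝ) ≤ Fintype.card A * C := by positivity
      rw [show 2 * (η / (2 * ((Fintype.card A : ℝ) * C + 1))) * (Fintype.card A * C)
        = η * ((Fintype.card A * C) / (Fintype.card A * C + 1)) by field_simp]
      have h6 : ((Fintype.card A : ℝ) * C) / (Fintype.card A * C + 1) ≤ 1 := by
        rw [div_le_one (by linarith)]
        linarith
      nlinarith
    have h5 : 0 < P H m a * s k := mul_pos hPm (hs0 k)
    calc (Fintype.card A : ℝ) * (2 * ε * P H m a * (C * s k))
        = (2 * ε * (Fintype.card A * C)) * (P H m a * s k) := by ring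
      _ ≤ _ := mul_le_mul_of_nonneg_right h4 h5.le
  have h5 : 0 < P H m a * s k := mul_pos hPm (hs0 k)
  rw [div_sub_one h5.ne', abs_div, abs_of_pos h5, div_le_iff₀ h5]
  exact e2

theorem perron (hD : 2 ≤ Fintype.card A) {H : A → List A}
    (hne : ∀ a, H a ≠ []) (hprim : PrimitiveSubst H) {u : ℕ → A} (hu : substSeq H u = u)
    (h2 : TwoFull H u) (μ : Measure (ℕ → A)) [IsProbabilityMeasure μ]
    (huniq : ∀ ν : Measure (ℕ → A), IsProbabilityMeasure ν →
      Measure.map shift ν = ν → ν (orbitClosure u)ᶜ = 0 → ν = μ) :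
    ∃ v : A → ℝ, (∀ a, 0 < v a) ∧ ∀ a b,
      Tendsto (fun m => (P H m a : ℝ) / P H m b) atTop (𝓝 (v a / v b)) := by
  obtain ⟨s, hs0, hs⟩ := P_approx hD hne hprim hu h2 μ huniq
  have hP : ∀ m a, (0 : ℝ) < P H m a := fun m a => by exact_mod_cast P_pos H hne m a
  let D : A → ℕ → ℝ := fun a m => Real.log (P H m a) - Real.log (P H m (u 0))
  have hcau : ∀ a, CauchySeq (D a) := fun a => by
    rw [Metric.cauchySeq_iff']
    intro ε hε
    have hcont : ∀ᶠ t in 𝓝 (1 : ℝ), |Real.log t| < ε / 2 := by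
      have := (Real.continuousAt_log one_ne_zero).tendsto.abs
      rw [Real.log_one, abs_zero] at this
      exact this.eventually (gt_mem_nhds (half_pos hε))
    obtain ⟨η, hη, hη2⟩ := Metric.eventually_nhds_iff.1 hcont
    obtain ⟨M, hM⟩ := hs (η / 2) (half_pos hη)
    refine ⟨M, fun n hn => ?_⟩
    obtain ⟨k, rfl⟩ : ∃ k, n = k + M := ⟨n - M, by omega⟩
    have key : ∀ c, |Real.log (P H (k + M) c) - Real.log (P H M c) - Real.log (s k)| < ε / 2 :=
      fun c => by
        have := hη2 (y := (P H (k + M) c : ℝ) / (P H M c * s k))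
          (by rw [Real.dist_eq]; linarith [hM M le_rfl k c])
        rwa [Real.log_div (hP _ _).ne' (mul_pos (hP _ _) (hs0 k)).ne',
          Real.log_mul (hP _ _).ne' (hs0 k).ne', ← sub_sub] at this
    have k1 := abs_lt.1 (key a)
    have k2 := abs_lt.1 (key (u 0))
    rw [Real.dist_eq, abs_lt]
    simp only [D]
    constructor <;> linarith [k1.1, k1.2, k2.1, k2.2]
  choose t ht using fun a => cauchySeq_tendsto_of_complete (hcau a)
  refine ⟨fun a => Real.exp (t a), fun a => Real.exp_pos _, fun a b => ?_⟩
  rw [← Real.exp_sub]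
  refine ((Real.continuous_exp.tendsto _).comp ((ht a).sub (ht b))).congr fun m => ?_
  simp only [Function.comp_apply, D]
  rw [sub_sub_sub_cancel_right, Real.exp_sub, Real.exp_log (hP _ _), Real.exp_log (hP _ _)]

end perron

end RL

namespace RL

section final

variable [Fintype A] [DecidableEq A] [TopologicalSpace A] [DiscreteTopology A]
  [MeasurableSpace A] [BorelSpace A]

/-- The desubstitution property provided by `scale`. -/
def Scale (H : A → List A) (u : ℕ → A) (l : ℕ) : Prop :=
  ∀ (z : ℕ → A) (k n : ℕ), k < (H (z 0)).length → l ≤ n →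
      InL u (shift^[k] (substSeq H z)) n → ∃ j, InL u z j ∧ k + n ≤ cut H z j

theorem sub_not_mem {H : A → List A} (hne : ∀ a, H a ≠ []) {u : ℕ → A} {l : ℕ}
    (hl : Scale H u l) {x : ℕ → A} (hx : x ∉ orbitClosure u) (N : ℕ) :
    (substSeq H)^[N] x ∉ orbitClosure u := by
  induction N with
  | zero => simpa using hx
  | succ N ih =>
    rw [Function.iterate_succ_apply']
    set y := (substSeq H)^[N] x
    intro hm
    rw [mem_K_iff] at hm
    obtain ⟨j, h1, h2⟩ := hl y 0 (max l (cut H y (delta u y) + 1))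
      (List.length_pos_of_ne_nil (hne _)) (le_max_left _ _) (hm _)
    have h3 := cut_mono H y ((delta_spec ih).2 j h1)
    have h4 := le_max_right l (cut H y (delta u y) + 1)
    omega

theorem iter_mem_K {H : A → List A} (hne : ∀ a, H a ≠ []) {u : ℕ → A} (hu : substSeq H u = u)
    {z : ℕ → A} (hz : z ∈ orbitClosure u) (m k : ℕ) :
    shift^[k] ((substSeq H)^[m] z) ∈ orbitClosure u := by
  rw [mem_K_iff] at hz ⊢
  intro n
  exact (((hz (k + n)).iter H hne hu m).mono (le_len H hne m z (k + n))).drop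

theorem renorm_K {H : A → List A} (hne : ∀ a, H a ≠ []) {u : ℕ → A} (hu : substSeq H u = u)
    {z : ℕ → A} (hz : z ∈ orbitClosure u) {V : (ℕ → A) → ℝ}
    (hV : ∀ y ∈ orbitClosure u, V y = 0) (m : ℕ) : (renorm H)^[m] V z = 0 := by
  rw [renorm_iter H hne]
  exact Finset.sum_eq_zero fun k _ => hV _ (iter_mem_K hne hu hz m k)

theorem two_le_delta {H : A → List A} {u : ℕ → A} (h2 : TwoFull H u) {z : ℕ → A}
    (hz : z ∉ orbitClosure u) : 2 ≤ delta u z :=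
  (delta_spec hz).2 _ (inL_one h2 z)

theorem p_lt_L {H : A → List A} (hne : ∀ a, H a ≠ []) {u : ℕ → A} (h2 : TwoFull H u) {z : ℕ → A}
    (hz : z ∉ orbitClosure u) (m : ℕ) : P H m (z 0) < len H m z (delta u z) := by
  have h := len_mono H m z (two_le_delta h2 hz)
  have h1 := len_succ H m z 1
  rw [len_one] at h1
  have := P_pos H hne m (z 1)
  norm_num at h1
  omega

theorem delta_iter {H : A → List A} (hne : ∀ a, H a ≠ []) {u : ℕ → A} (hu : substSeq H u = u)
    (h2 : TwoFull H u) {l : ℕ} (hl : Scale H u l) {z : ℕ → A} (hg : Good H u l z)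
    (hz : z ∉ orbitClosure u) (m k : ℕ) (hk : k < P H m (z 0)) :
    shift^[k] ((substSeq H)^[m] z) ∉ orbitClosure u ∧
      k + delta u (shift^[k] ((substSeq H)^[m] z)) = len H m z (delta u z) := by
  have hpl := p_lt_L hne h2 hz m
  have hlow : InL u (shift^[k] ((substSeq H)^[m] z)) (len H m z (delta u z) - k) := by
    apply InL.drop
    rw [Nat.add_sub_cancel' (by omega)]
    exact (delta_spec hz).1.iter H hne hu m
  have hup : ∀ n, InL u (shift^[k] ((substSeq H)^[m] z)) n → k + n ≤ len H m z (delta u z) := by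
    intro n hn
    have hn' : InL u (shift^[k] ((substSeq H)^[m] z)) (max l n) := by
      rcases le_total l n with h | h
      · rwa [max_eq_right h]
      · rw [max_eq_left h]; exact hg k m
    obtain ⟨j, h1, h3⟩ := scale_iter hne hl m z hg k _ hk (le_max_left _ _) hn'
    have := len_mono H m z ((delta_spec hz).2 j h1)
    have := le_max_right l n
    omega
  have hnot : shift^[k] ((substSeq H)^[m] z) ∉ orbitClosure u := by
    intro h
    rw [mem_K_iff] at h
    have := hup _ (h (len H m z (delta u z) + 1))
    omega
  refine ⟨hnot, ?_⟩
  have a1 := hup _ (delta_spec hnot).1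
  have a2 := (delta_spec hnot).2 _ hlow
  omega

theorem renorm_good {H : A → List A} (hne : ∀ a, H a ≠ []) {u : ℕ → A} (hu : substSeq H u = u)
    (h2 : TwoFull H u) {l : ℕ} (hl : Scale H u l) {z : ℕ → A} (hg : Good H u l z)
    (hz : z ∉ orbitClosure u) {V G : (ℕ → A) → ℝ} {α : ℝ}
    (hV : ∀ y ∉ orbitClosure u, V y = G y / (delta u y : ℝ) ^ α) (m : ℕ) :
    (renorm H)^[m] V z = ∑ k ∈ Finset.range (P H m (z 0)),
      G (shift^[k] ((substSeq H)^[m] z)) / ((len H m z (delta u z) : ℝ) - k) ^ α := by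
  rw [renorm_iter H hne]
  refine Finset.sum_congr rfl fun k hk => ?_
  obtain ⟨h1, h3⟩ := delta_iter hne hu h2 hl hg hz m k (Finset.mem_range.1 hk)
  rw [hV _ h1, ← h3]
  push_cast
  rw [add_sub_cancel_left]

/-- limiting ratio -/
noncomputable def rho (v : A → ℝ) (u z : ℕ → A) : ℝ :=
  (∑ i ∈ Finset.range (delta u z), v (z i)) / v (z 0)

open Classical in
/-- the local limit function -/
noncomputable def Floc (v : A → ℝ) (u z : ℕ → A) : ℝ :=
  if z ∈ orbitClosure u then 0 else Real.log (rho v u z / (rho v u z - 1))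

theorem rho_sub_one {H : A → List A} {u : ℕ → A} (h2 : TwoFull H u) {z : ℕ → A}
    (hz : z ∉ orbitClosure u) {v : A → ℝ} (hv : ∀ a, 0 < v a) :
    rho v u z - 1 = (∑ i ∈ Finset.range (delta u z - 1), v (z (i + 1))) / v (z 0) := by
  have h := two_le_delta h2 hz
  obtain ⟨d, hd⟩ : ∃ d, delta u z = d + 1 := ⟨delta u z - 1, by omega⟩
  rw [rho, hd, Finset.sum_range_succ', Nat.add_sub_cancel, add_div, div_self (hv _).ne']
  ring

theorem rho_gt {H : A → List A} {u : ℕ → A} (h2 : TwoFull H u) {z : ℕ → A}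
    (hz : z ∉ orbitClosure u) {v : A → ℝ} (hv : ∀ a, 0 < v a) : 1 < rho v u z := by
  have h := rho_sub_one h2 hz hv
  have h' := two_le_delta h2 hz
  have : 0 < rho v u z - 1 := by
    rw [h]
    refine div_pos (Finset.sum_pos (fun i _ => hv _) ?_) (hv _)
    rw [Finset.nonempty_range_iff]; omega
  linarith

theorem rho_lim {H : A → List A} (hne : ∀ a, H a ≠ []) {u z : ℕ → A} {v : A → ℝ}
    (hlim : ∀ a b, Tendsto (fun m => (P H m a : ℝ) / P H m b) atTop (𝓝 (v a / v b))) :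
    Tendsto (fun m => (len H m z (delta u z) : ℝ) / (P H m (z 0) : ℕ)) atTop (𝓝 (rho v u z)) := by
  have := tendsto_finset_sum (Finset.range (delta u z)) fun i _ => hlim (z i) (z 0)
  unfold rho
  rw [Finset.sum_div]
  refine this.congr fun m => ?_
  rw [len, Nat.cast_sum, Finset.sum_div]

theorem P_tendsto (hD : 2 ≤ Fintype.card A) {H : A → List A} (hne : ∀ a, H a ≠ [])
    (hprim : PrimitiveSubst H) (a : A) : Tendsto (fun m => P H m a) atTop atTop := by
  rw [tendsto_atTop]
  intro n
  obtain ⟨N, hN⟩ := P_growth hD H hne hprim n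
  filter_upwards [eventually_ge_atTop N] with m hm using hN m hm a

theorem lim_one (hD : 2 ≤ Fintype.card A) {H : A → List A} (hne : ∀ a, H a ≠ [])
    (hprim : PrimitiveSubst H) {u : ℕ → A} (hu : substSeq H u = u)
    (h2 : TwoFull H u) (μ : Measure (ℕ → A))
    (huniq : ∀ ν : Measure (ℕ → A), IsProbabilityMeasure ν →
      Measure.map shift ν = ν → ν (orbitClosure u)ᶜ = 0 → ν = μ)
    {v : A → ℝ} (hv : ∀ a, 0 < v a)
    (hlim : ∀ a b, Tendsto (fun m => (P H m a : ℝ) / P H m b) atTop (𝓝 (v a / v b)))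
    {l : ℕ} (hl : Scale H u l) {z : ℕ → A} (hg : Good H u l z)
    {V G : (ℕ → A) → ℝ} (hG : Continuous G) (hV0 : ∀ y ∈ orbitClosure u, V y = 0)
    (hV : ∀ y ∉ orbitClosure u, V y = G y / (delta u y : ℝ) ^ (1 : ℝ)) :
    Tendsto (fun m : ℕ => (renorm H)^[m] V z) atTop (𝓝 ((∫ y, G y ∂μ) * Floc v u z)) := by
  by_cases hz : z ∈ orbitClosure u
  · simp only [renorm_K hne hu hz hV0]
    simp [Floc, hz]
  have hF : Floc v u z = Real.log (rho v u z / (rho v u z - 1)) := by simp [Floc, hz]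
  have A1 := log_lim (p_lt_L hne h2 hz) (P_tendsto hD hne hprim (z 0)) (fun m => P_pos H hne m _)
    (rho_lim hne hlim) (rho_gt h2 hz hv)
  have A2 := abel_lim (p_lt_L hne h2 hz) (P_tendsto hD hne hprim (z 0))
    (fun m => P_pos H hne m _) (rho_lim hne hlim) (rho_gt h2 hz hv)
    (fun m i => G (shift^[i] ((substSeq H)^[m] z)) - ∫ y, G y ∂μ) (by
      intro ε hε
      obtain ⟨C, hC, h⟩ := birkhoff u μ huniq hG hε
      refine ⟨C, hC, fun m n hn => h _ n ?_⟩
      exact ((delta_spec hz).1.iter H hne hu m).mono (hn.trans (p_lt_L hne h2 hz m).le))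
  rw [hF]
  have A3 := A2.add (A1.const_mul (∫ y, G y ∂μ))
  rw [zero_add] at A3
  refine A3.congr fun m => ?_
  rw [renorm_good hne hu h2 hl hg hz hV, Finset.mul_sum, ← Finset.sum_add_distrib]
  refine Finset.sum_congr rfl fun k _ => ?_
  rw [Real.rpow_one]
  ring

theorem lim_big (hD : 2 ≤ Fintype.card A) {H : A → List A} (hne : ∀ a, H a ≠ [])
    (hprim : PrimitiveSubst H) {u : ℕ → A} (hu : substSeq H u = u)
    (h2 : TwoFull H u)
    {v : A → ℝ} (hv : ∀ a, 0 < v a)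
    (hlim : ∀ a b, Tendsto (fun m => (P H m a : ℝ) / P H m b) atTop (𝓝 (v a / v b)))
    {l : ℕ} (hl : Scale H u l) {z : ℕ → A} (hg : Good H u l z)
    {V G : (ℕ → A) → ℝ} (hG : Continuous G) (hV0 : ∀ y ∈ orbitClosure u, V y = 0)
    {α : ℝ} (hα : 1 < α)
    (hV : ∀ y ∉ orbitClosure u, V y = G y / (delta u y : ℝ) ^ α) :
    Tendsto (fun m : ℕ => (renorm H)^[m] V z) atTop (𝓝 0) := by
  by_cases hz : z ∈ orbitClosure u
  · simp only [renorm_K hne hu hz hV0]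
    exact tendsto_const_nhds
  obtain ⟨B, hB, hb⟩ := bounded hG
  have A2 := small_lim (p_lt_L hne h2 hz) (P_tendsto hD hne hprim (z 0))
    (fun m => P_pos H hne m _) (rho_lim hne hlim) (rho_gt h2 hz hv) hα
    (fun m i => G (shift^[i] ((substSeq H)^[m] z))) B hB (fun m k => hb _)
  refine A2.congr fun m => ?_
  rw [renorm_good hne hu h2 hl hg hz hV]

theorem lim_small (hD : 2 ≤ Fintype.card A) {H : A → List A} (hne : ∀ a, H a ≠ [])
    (hprim : PrimitiveSubst H) {u : ℕ → A} (hu : substSeq H u = u)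
    (h2 : TwoFull H u)
    {v : A → ℝ} (hv : ∀ a, 0 < v a)
    (hlim : ∀ a b, Tendsto (fun m => (P H m a : ℝ) / P H m b) atTop (𝓝 (v a / v b)))
    {l : ℕ} (hl : Scale H u l) {z : ℕ → A} (hg : Good H u l z) (hz : z ∉ orbitClosure u)
    {V g h : (ℕ → A) → ℝ} (hgc : Continuous g) (hg0 : ∀ y, 0 < g y) (hh : Continuous h)
    (hh0 : ∀ y ∈ orbitClosure u, h y = 0)
    {α : ℝ} (hα0 : 0 < α) (hα : α < 1)
    (hV : ∀ y ∉ orbitClosure u, V y = (g y + h y) / (delta u y : ℝ) ^ α) :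
    Tendsto (fun m : ℕ => (renorm H)^[m] V z) atTop atTop := by
  obtain ⟨c, hc, hgc'⟩ : ∃ c, 0 < c ∧ ∀ y, 2 * c ≤ g y := by
    obtain ⟨y0, -, hy0⟩ := isCompact_univ.exists_isMinOn ⟨z, Set.mem_univ z⟩ hgc.continuousOn
    refine ⟨g y0 / 2, by linarith [hg0 y0], fun y => ?_⟩
    have := hy0 (Set.mem_univ y)
    simp only [Set.mem_setOf_eq] at this
    linarith
  obtain ⟨n, hn⟩ := unif_cont hh hc
  have hD' := D_atTop (P_tendsto hD hne hprim (z 0))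
    (fun m => P_pos H hne m _) (rho_lim hne hlim) (rho_gt h2 hz hv)
  have A2 := large_lim (p_lt_L hne h2 hz) (P_tendsto hD hne hprim (z 0))
    (fun m => P_pos H hne m _) (rho_lim hne hlim) (rho_gt h2 hz hv) hα hα0
    (fun m i => g (shift^[i] ((substSeq H)^[m] z)) + h (shift^[i] ((substSeq H)^[m] z))) c hc (by
      filter_upwards [hD'.eventually_ge_atTop (n : ℝ)] with m hm k hk
      have hm' : n + P H m (z 0) ≤ len H m z (delta u z) := by
        have : (n : ℝ) + (P H m (z 0) : ℕ) ≤ (len H m z (delta u z) : ℕ) := by linarith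
        exact_mod_cast this
      have h1 : InL u (shift^[k] ((substSeq H)^[m] z)) n :=
        (((delta_spec hz).1.iter H hne hu m).mono (by omega)).drop
      obtain ⟨q, hq⟩ := h1
      have h3 := hn (shift^[k] ((substSeq H)^[m] z)) (shift^[q] u) (fun i hi => by rw [hq i hi, shift_iter])
      rw [hh0 _ (orbit_mem_K u q), sub_zero] at h3
      have := hgc' (shift^[k] ((substSeq H)^[m] z))
      have := (abs_lt.1 h3).1
      linarith)
  refine A2.congr fun m => ?_
  rw [renorm_good (G := fun y => g y + h y) hne hu h2 hl hg hz hV]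

end final

end RL

namespace RL

section conti

variable [Fintype A] [DecidableEq A] [TopologicalSpace A] [DiscreteTopology A]
  [MeasurableSpace A] [BorelSpace A]

theorem cyl_nhds (z : ℕ → A) (n : ℕ) : ∀ᶠ z' in 𝓝 z, ∀ i < n, z i = z' i := by
  have : ∀ᶠ z' in 𝓝 z, ∀ i ∈ Finset.range n, z i = z' i := by
    rw [Filter.eventually_all_finset]
    intro i _
    have h : Tendsto (fun z' : ℕ → A => z' i) (𝓝 z) (𝓝 (z i)) := (continuous_apply i).continuousAt
    rw [nhds_discrete A, tendsto_pure] at h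
    filter_upwards [h] with z' hz' using hz'.symm
  filter_upwards [this] with z' hz' i hi using hz' i (Finset.mem_range.2 hi)

theorem InL.congr {u z z' : ℕ → A} {n : ℕ} (h : InL u z n) (hz : ∀ i < n, z i = z' i) :
    InL u z' n := by
  obtain ⟨p, hp⟩ := h
  exact ⟨p, fun s hs => by rw [← hz s hs, hp s hs]⟩

theorem Floc_continuous {H : A → List A} {u : ℕ → A} (h2 : TwoFull H u)
    {v : A → ℝ} (hv : ∀ a, 0 < v a) : Continuous (Floc v u) := by
  rw [continuous_iff_continuousAt]
  intro z
  by_cases hz : z ∈ orbitClosure u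
  · obtain ⟨κ, hκ, hκ'⟩ : ∃ κ : ℝ, 0 < κ ∧ ∀ a b, κ ≤ v a / v b := by
      haveI : Nonempty (A × A) := ⟨(z 0, z 0)⟩
      obtain ⟨q, hq⟩ := Finite.exists_min (fun q : A × A => v q.1 / v q.2)
      exact ⟨_, div_pos (hv _) (hv _), fun a b => hq (a, b)⟩
    have hF : Floc v u z = 0 := by simp [Floc, hz]
    rw [ContinuousAt, hF, Metric.tendsto_nhds]
    intro ε hε
    obtain ⟨n, hn⟩ := exists_nat_gt (1 / (κ * ε))
    have hn0 : (0 : ℝ) < n := lt_trans (by positivity) hn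
    filter_upwards [cyl_nhds z (n + 1)] with z' hz'
    rw [Real.dist_eq, sub_zero]
    by_cases hz'' : z' ∈ orbitClosure u
    · simpa [Floc, hz''] using hε
    have hF' : Floc v u z' = Real.log (rho v u z' / (rho v u z' - 1)) := by simp [Floc, hz'']
    have hd : n + 1 ≤ delta u z' :=
      (delta_spec hz'').2 _ ((((mem_K_iff u z).1 hz) (n + 1)).congr hz')
    have hr : (n : ℝ) * κ ≤ rho v u z' - 1 := by
      rw [rho_sub_one h2 hz'' hv, Finset.sum_div]
      calc (n : ℝ) * κ ≤ ((delta u z' - 1 : ℕ) : ℝ) * κ := by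
            have : n ≤ delta u z' - 1 := by omega
            gcongr
        _ = ∑ i ∈ Finset.range (delta u z' - 1), κ := by simp
        _ ≤ _ := Finset.sum_le_sum fun i _ => hκ' _ _
    have hnk : 0 < (n : ℝ) * κ := by positivity
    have hpos : 0 < rho v u z' - 1 := by linarith
    have e : rho v u z' / (rho v u z' - 1) = 1 + 1 / (rho v u z' - 1) := by
      field_simp
      ring
    rw [hF', abs_of_nonneg (Real.log_nonneg (by rw [e]; linarith [one_div_pos.2 hpos]))]
    have h3 := Real.log_le_sub_one_of_pos (x := rho v u z' / (rho v u z' - 1))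
      (div_pos (by linarith) hpos)
    have h4 : 1 / (rho v u z' - 1) ≤ 1 / (n * κ) := one_div_le_one_div_of_le hnk hr
    have h5 : 1 / ((n : ℝ) * κ) < ε := by
      rw [div_lt_iff₀ (by positivity)] at hn ⊢
      nlinarith
    linarith
  · have key : ∀ᶠ z' in 𝓝 z, Floc v u z' = Floc v u z := by
      filter_upwards [cyl_nhds z (delta u z + 1)] with z' hz'
      have hn : ∀ n, InL u z' n → n ≤ delta u z := by
        intro n hn
        by_contra hc
        have := (delta_spec hz).2 _
          ((hn.mono (show delta u z + 1 ≤ n by omega)).congr fun i hi => (hz' i hi).symm)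
        omega
      have hz'' : z' ∉ orbitClosure u := by
        intro h
        have := hn _ ((mem_K_iff u z').1 h (delta u z + 1))
        omega
      have hd : delta u z' = delta u z := by
        apply le_antisymm (hn _ (delta_spec hz'').1)
        exact (delta_spec hz'').2 _ ((delta_spec hz).1.congr fun i hi => hz' i (by omega))
      have hr : rho v u z' = rho v u z := by
        unfold rho
        rw [hd, ← hz' 0 (by omega)]
        congr 1
        refine Finset.sum_congr rfl fun i hi => ?_
        rw [← hz' i (by have := Finset.mem_range.1 hi; omega)]
      simp [Floc, hz, hz'', hr]
    exact (continuousAt_const.congr (key.mono fun _ h => h.symm))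

theorem iter_continuous {H : A → List A} (hne : ∀ a, H a ≠ []) (N : ℕ) :
    Continuous ((substSeq H)^[N]) := by
  refine continuous_pi fun q => ?_
  rw [continuous_iff_continuousAt]
  intro z
  refine continuousAt_const.congr (f := fun _ => (substSeq H)^[N] z q) ?_
  filter_upwards [cyl_nhds z (q + 1)] with z' hz'
  exact iter_agree H hne N hz' (lt_of_lt_of_le (Nat.lt_succ_self q) (le_len H hne N z (q + 1)))

/-- the fixed point of the renormalization operator -/
noncomputable def Ufix (H : A → List A) (v : A → ℝ) (u : ℕ → A) (N : ℕ) (x : ℕ → A) : ℝ :=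
  ∑ j ∈ Finset.range (P H N (x 0)), Floc v u (shift^[j] ((substSeq H)^[N] x))

theorem Ufix_continuous {H : A → List A} (hne : ∀ a, H a ≠ []) {u : ℕ → A} (h2 : TwoFull H u)
    {v : A → ℝ} (hv : ∀ a, 0 < v a) (N : ℕ) : Continuous (Ufix H v u N) := by
  rw [continuous_iff_continuousAt]
  intro x
  have hc : Continuous (fun x' : ℕ → A =>
      ∑ j ∈ Finset.range (P H N (x 0)), Floc v u (shift^[j] ((substSeq H)^[N] x'))) :=
    continuous_finset_sum _ fun j _ =>
      (Floc_continuous h2 hv).comp ((continuous_shift.iterate j).comp (iter_continuous hne N))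
  refine hc.continuousAt.congr ?_
  filter_upwards [cyl_nhds x 1] with x' hx'
  rw [Ufix, hx' 0 (by omega)]

theorem renorm_split {H : A → List A} (hne : ∀ a, H a ≠ []) (V : (ℕ → A) → ℝ) (N m : ℕ)
    (x : ℕ → A) : (renorm H)^[m + N] V x = ∑ j ∈ Finset.range (P H N (x 0)),
      (renorm H)^[m] V (shift^[j] ((substSeq H)^[N] x)) := by
  rw [add_comm, Function.iterate_add_apply, renorm_iter H hne _ N]

theorem sum_atTop {ι : Type*} (s : Finset ι) (f : ℕ → ι → ℝ) (i : ι) (hi : i ∈ s)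
    (h : Tendsto (fun m => f m i) atTop atTop) (h0 : ∀ j ∈ s, ∀ᶠ m in atTop, 0 ≤ f m j) :
    Tendsto (fun m => ∑ j ∈ s, f m j) atTop atTop := by
  refine tendsto_atTop_mono' _ ?_ h
  have := (Filter.eventually_all_finset s).2 h0
  filter_upwards [this] with m hm
  exact Finset.single_le_sum hm hi

end conti

end RL

/-- (Theorem A.) There is a continuous fixed point `U` of the
renormalization operator such that for every potential `V` of the form
`V = g/δ^α + h/δ^α` off `K` (with `g` continuous positive, `h` continuous vanishing
on `K`, `V` vanishing on `K`), and every `x ∉ K`: `R^m V(x) → 0` if `α > 1`,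
`R^m V(x) → +∞` if `α < 1`, and `R^m V(x) → (∫ g dμ_K)·U(x)` if `α = 1`. -/
theorem renorm_iterates_limit
    {A : Type*} [Fintype A] [DecidableEq A] [TopologicalSpace A] [DiscreteTopology A]
    [MeasurableSpace A] [BorelSpace A]
    (hD : 2 ≤ Fintype.card A)
    (H : A → List A) (hne : ∀ a, H a ≠ [])
    (hprim : PrimitiveSubst H) (haper : AperiodicSubst H)
    (hmarked : MarkedSubst H hne)
    (u : ℕ → A) (hu : IsFixedPointSubst H u) (h2full : TwoFull H u)
    (μ : Measure (ℕ → A)) [IsProbabilityMeasure μ]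
    (hinv : Measure.map shift μ = μ) (hsupp : μ (orbitClosure u)ᶜ = 0)
    (huniq : ∀ ν : Measure (ℕ → A), IsProbabilityMeasure ν →
      Measure.map shift ν = ν → ν (orbitClosure u)ᶜ = 0 → ν = μ) :
    ∃ U : (ℕ → A) → ℝ, Continuous U ∧ renorm H U = U ∧
      ∀ (α : ℝ), 0 < α →
        ∀ V g h : (ℕ → A) → ℝ,
          Continuous g → (∀ y, 0 < g y) →
          Continuous h → (∀ y ∈ orbitClosure u, h y = 0) →
          (∀ y ∈ orbitClosure u, V y = 0) →
          (∀ y ∉ orbitClosure u,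
            V y = g y / (delta u y : ℝ) ^ α + h y / (delta u y : ℝ) ^ α) →
          ∀ x ∉ orbitClosure u,
            (1 < α → Tendsto (fun m : ℕ => (renorm H)^[m] V x) atTop (𝓝 0)) ∧
            (α < 1 → Tendsto (fun m : ℕ => (renorm H)^[m] V x) atTop atTop) ∧
            (α = 1 → Tendsto (fun m : ℕ => (renorm H)^[m] V x) atTop
              (𝓝 ((∫ y, g y ∂μ) * U x))) := by
  have hu' : substSeq H u = u := hu
  obtain ⟨v, hv, hlim⟩ := RL.perron hD hne hprim hu' h2full μ huniq
  obtain ⟨l, hl'⟩ := RL.scale hD hprim haper hmarked hu'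
  have hl : RL.Scale H u l := hl'
  obtain ⟨N, hN⟩ := RL.P_growth hD H hne hprim l
  have hgood : ∀ x j, RL.Good H u l (shift^[j] ((substSeq H)^[N] x)) :=
    fun x j => RL.good_of_large hne hu' h2full hN x j
  -- the case `α = 1`, valid at every point
  have hone : ∀ V G : (ℕ → A) → ℝ, Continuous G → (∀ y ∈ orbitClosure u, V y = 0) →
      (∀ y ∉ orbitClosure u, V y = G y / (delta u y : ℝ) ^ (1 : ℝ)) → ∀ x,
      Tendsto (fun m : ℕ => (renorm H)^[m] V x) atTop
        (𝓝 ((∫ y, G y ∂μ) * RL.Ufix H v u N x)) := by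
    intro V G hG hV0 hV x
    rw [← tendsto_add_atTop_iff_nat N]
    simp only [RL.renorm_split hne V N]
    rw [RL.Ufix, Finset.mul_sum]
    exact tendsto_finset_sum _ fun j _ =>
      RL.lim_one hD hne hprim hu' h2full μ huniq hv hlim hl (hgood x j) hG hV0 hV
  refine ⟨RL.Ufix H v u N, RL.Ufix_continuous hne h2full hv N, ?_, ?_⟩
  · classical
    let V₀ : (ℕ → A) → ℝ :=
      fun y => if y ∈ orbitClosure u then 0 else 1 / (delta u y : ℝ) ^ (1 : ℝ)
    have h1 : ∀ x, Tendsto (fun m : ℕ => (renorm H)^[m] V₀ x) atTop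
        (𝓝 (RL.Ufix H v u N x)) := by
      intro x
      have := hone V₀ (fun _ => 1) continuous_const (fun y hy => by simp [V₀, hy])
        (fun y hy => by simp [V₀, hy]) x
      simpa using this
    funext x
    have h3 : Tendsto (fun m : ℕ => (renorm H)^[m + 1] V₀ x) atTop
        (𝓝 (renorm H (RL.Ufix H v u N) x)) := by
      simp only [Function.iterate_succ_apply']
      unfold renorm
      exact tendsto_finset_sum _ fun j _ => h1 _
    exact tendsto_nhds_unique h3 ((tendsto_add_atTop_iff_nat 1).2 (h1 x))
  · intro α hα V g h hg hgpos hh hh0 hV0 hV x hx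
    have hV' : ∀ y ∉ orbitClosure u, V y = (g y + h y) / (delta u y : ℝ) ^ α := by
      intro y hy
      rw [hV y hy, add_div]
    refine ⟨fun h1 => ?_, fun h1 => ?_, fun h1 => ?_⟩
    · rw [← tendsto_add_atTop_iff_nat N]
      simp only [RL.renorm_split hne V N]
      have := tendsto_finset_sum (Finset.range (RL.P H N (x 0))) fun j _ =>
        RL.lim_big hD hne hprim hu' h2full hv hlim hl (hgood x j) (hg.add hh) hV0 h1 hV'
      simpa using this
    · rw [← tendsto_add_atTop_iff_nat N]
      simp only [RL.renorm_split hne V N]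
      refine RL.sum_atTop _
        (fun m j => (renorm H)^[m] V (shift^[j] ((substSeq H)^[N] x))) 0
        (Finset.mem_range.2 (RL.P_pos H hne N _)) ?_ ?_
      · exact RL.lim_small hD hne hprim hu' h2full hv hlim hl (hgood x 0)
          (by simpa using RL.sub_not_mem hne hl hx N) hg hgpos hh hh0 hα h1 hV'
      · intro j _
        by_cases hz : shift^[j] ((substSeq H)^[N] x) ∈ orbitClosure u
        · simp [RL.renorm_K hne hu' hz hV0]
        · exact (RL.lim_small hD hne hprim hu' h2full hv hlim hl (hgood x j)
            hz hg hgpos hh hh0 hα h1 hV').eventually_ge_atTop 0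
    · subst h1
      have hint : ∫ y, (g y + h y) ∂μ = ∫ y, g y ∂μ := by
        refine integral_congr_ae ?_
        have : ∀ᵐ y ∂μ, y ∈ orbitClosure u := by
          rw [ae_iff]
          exact hsupp
        filter_upwards [this] with y hy
        rw [hh0 y hy, add_zero]
      rw [← hint]
      exact hone V (fun y => g y + h y) (hg.add hh) hV0 hV' x
end
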